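/- arXiv:2012.12952 — 3 statements merged into one kernel-verified Lean document; each statement's English description precedes it below -/
import Mathlib

section
/- Let Y be a CAT(0) space, E : Y → ℝ ∪ {+∞} a λ-convex and lower semicontinuous functional with D(E) nonempty, λ ∈ ℝ. Then for every y in the closure of D(E) there exists a gradient flow trajectory for E starting from y, i.e. a locally absolutely continuous curve (y_t)_{t>0} with y_t → y as t↓0 satisfying the Evolution Variational Inequality. -/
open Filter MeasureTheory Set Bornology
open scoped ENNReal Topology NNReal

/-- A (constant-speed, minimizing) geodesic defined on `[0,1]`:
`d(γ_s, γ_t) = |s - t| * d(γ_0, γ_1)` for all `s, t ∈ [0,1]`. -/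
def IsGeodesic {Y : Type*} [MetricSpace Y] (γ : ℝ → Y) : Prop :=
  ∀ s ∈ Set.Icc (0:ℝ) 1, ∀ t ∈ Set.Icc (0:ℝ) 1,
    dist (γ s) (γ t) = |s - t| * dist (γ 0) (γ 1)

/-- A metric space is geodesic if every two points are joined by a geodesic. -/
def GeodesicSpace (Y : Type*) [MetricSpace Y] : Prop :=
  ∀ x y : Y, ∃ γ : ℝ → Y, IsGeodesic γ ∧ γ 0 = x ∧ γ 1 = y

/-- The CAT(0) condition: geodesic space satisfying the comparison inequality
`d²(γ_t, a) ≤ (1-t)·d²(γ_0, a) + t·d²(γ_1, a) − t(1-t)·d²(γ_0, γ_1)`.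
(Completeness is required separately as a typeclass assumption.) -/
def Cat0 (Y : Type*) [MetricSpace Y] : Prop :=
  GeodesicSpace Y ∧
    ∀ γ : ℝ → Y, IsGeodesic γ → ∀ a : Y, ∀ t ∈ Set.Icc (0:ℝ) 1,
      dist (γ t) a ^ 2 ≤ (1 - t) * dist (γ 0) a ^ 2 + t * dist (γ 1) a ^ 2
        - t * (1 - t) * dist (γ 0) (γ 1) ^ 2

/-- A subset is geodesically convex if every geodesic joining two of its points
lies entirely inside it. -/
def GeodesicConvex {Y : Type*} [MetricSpace Y] (C : Set Y) : Prop :=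
  ∀ γ : ℝ → Y, IsGeodesic γ → γ 0 ∈ C → γ 1 ∈ C → ∀ t ∈ Set.Icc (0:ℝ) 1, γ t ∈ C

/-- `lam`-convexity along geodesics of an extended-real-valued functional:
`E(γ_t) ≤ (1-t)E(γ_0) + tE(γ_1) − (lam/2)t(1−t)d²(γ_0,γ_1)`. -/
def LamConvex {Y : Type*} [MetricSpace Y] (lam : ℝ) (E : Y → EReal) : Prop :=
  ∀ γ : ℝ → Y, IsGeodesic γ → ∀ t ∈ Set.Icc (0:ℝ) 1,
    E (γ t) ≤ ((1 - t : ℝ) : EReal) * E (γ 0) + ((t : ℝ) : EReal) * E (γ 1)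
      - ((lam / 2 * t * (1 - t) * dist (γ 0) (γ 1) ^ 2 : ℝ) : EReal)

/-- The descending slope `|∂⁻E|(y) = limsup_{z→y} (E(y)−E(z))⁺ / d(y,z)`,
set to `∞` outside the domain `{E < ∞}` of `E`. -/
noncomputable def descendingSlope {Y : Type*} [MetricSpace Y] (E : Y → EReal) (y : Y) :
    ℝ≥0∞ :=
  if E y = ⊤ then ⊤
  else Filter.limsup (fun z => ENNReal.ofReal ((E y - E z).toReal / dist y z))
      (nhdsWithin y {y}ᶜ)

/-- `ω(y; (y_n)) := limsup_n d(y, y_n)²`. -/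
noncomputable def asymptoticRadius {Y : Type*} [MetricSpace Y] (yn : ℕ → Y) (y : Y) : ℝ :=
  Filter.limsup (fun n => dist y (yn n) ^ 2) Filter.atTop

/-- Weak convergence of a bounded sequence: `y` is an asymptotic center
(i.e. a minimizer of `ω(·; ·)`) of every subsequence. -/
def WeakConv {Y : Type*} [MetricSpace Y] (yn : ℕ → Y) (y : Y) : Prop :=
  Bornology.IsBounded (Set.range yn) ∧
    ∀ φ : ℕ → ℕ, StrictMono φ →
      ∀ z : Y, asymptoticRadius (yn ∘ φ) y ≤ asymptoticRadius (yn ∘ φ) z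

/-- Absolute continuity on a set `I ⊆ ℝ`: there is a nonnegative integrable `g`
with `d(y_s, y_t) ≤ ∫_s^t g` for `s ≤ t` in `I`. -/
def AbsContOnSet {Y : Type*} [MetricSpace Y] (y : ℝ → Y) (I : Set ℝ) : Prop :=
  ∃ g : ℝ → ℝ, (∀ t, 0 ≤ g t) ∧ MeasureTheory.IntegrableOn g I ∧
    ∀ s ∈ I, ∀ t ∈ I, s ≤ t → dist (y s) (y t) ≤ ∫ r in s..t, g r

/-- Absolute continuity on the interval `[a,b]`. -/
def AbsContOn {Y : Type*} [MetricSpace Y] (y : ℝ → Y) (a b : ℝ) : Prop :=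
  AbsContOnSet y (Set.Icc a b)

/-- Local absolute continuity on `(0,∞)`. -/
def LocAbsCont {Y : Type*} [MetricSpace Y] (y : ℝ → Y) : Prop :=
  ∀ a b : ℝ, 0 < a → a ≤ b → AbsContOn y a b

/-- The Evolution Variational Inequality: for every `z`, for a.e. `t > 0` the
derivative of `t ↦ ½ d²(y_t, z)` exists and
`(d/dt)(½d²(y_t,z)) + E(y_t) + (lam/2)d²(y_t,z) ≤ E(z)`. -/
def EVI {Y : Type*} [MetricSpace Y] (lam : ℝ) (E : Y → EReal) (y : ℝ → Y) : Prop :=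
  ∀ z : Y, ∀ᵐ t ∂(MeasureTheory.volume.restrict (Set.Ioi (0:ℝ))),
    ∃ d' : ℝ, HasDerivAt (fun s => dist (y s) z ^ 2 / 2) d' t ∧
      (d' : EReal) + E (y t) + ((lam / 2 * dist (y t) z ^ 2 : ℝ) : EReal) ≤ E z

/-- A gradient flow trajectory for `E` starting from `y₀`: a locally absolutely
continuous curve on `(0,∞)` converging to `y₀` at `0` and satisfying the EVI. -/
def GradientFlow {Y : Type*} [MetricSpace Y] (lam : ℝ) (E : Y → EReal) (y₀ : Y)
    (y : ℝ → Y) : Prop :=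
  LocAbsCont y ∧ Filter.Tendsto y (nhdsWithin 0 (Set.Ioi 0)) (nhds y₀) ∧ EVI lam E y

/-!
The trajectory is the limit of minimizing movements. For small `σ` the functional
`F + d(·, x)² / (2σ)` is strongly convex, so it has a minimizer `J x`, and comparing `J x` with the
points of a geodesic issuing from it gives the discrete evolution variational inequality
`(1 + λσ) d²(J x, z) + d²(J x, x) + 2σ F(J x) ≤ d²(x, z) + 2σ F(z)`.

From it, all estimates follow by choosing the competitor `z`. Together with the quadrilateral
inequality of CAT(0) spaces it shows that `J` is almost a contraction, and that the schemes with
steps `σ` and `mσ` started in the domain stay at squared distance `O(mσ)`, since the one-step errors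
are energy differences which telescope. The dyadic schemes therefore converge locally uniformly, and
by contraction this extends to starting points in the closure of the domain. At positive times the
energy is bounded even if it is infinite initially, so the speed of the scheme is bounded there and
the limit is locally Lipschitz. Finally the discrete inequality, summed over the steps between `t`
and `t + h`, passes to the limit; dividing by `h` gives the evolution variational inequality at
every point of differentiability, by lower semicontinuity.
-/

section Epigraph

variable {α : Type*} {D : Set α} {F : α → ℝ}

/-- The epigraph of the functional equal to `F` on `D` and to `+∞` elsewhere. A functional with
values in `ℝ ∪ {+∞}` is handled as such a pair `(D, F)`, and it is lower semicontinuous precisely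
when `epigraph D F` is closed. -/
def epigraph (D : Set α) (F : α → ℝ) : Set (α × ℝ) := {p | p.1 ∈ D ∧ F p.1 ≤ p.2}

variable [TopologicalSpace α]

lemma isClosed_epigraph_toReal {E : α → EReal} (hE : LowerSemicontinuous E)
    (hbot : ∀ x, E x ≠ ⊥) : IsClosed (epigraph {x | E x ≠ ⊤} fun x => (E x).toReal) := by
  have hpre : epigraph {x | E x ≠ ⊤} (fun x => (E x).toReal) =
      Prod.map id Real.toEReal ⁻¹' {p : α × EReal | E p.1 ≤ p.2} := by
    ext ⟨x, c⟩
    refine ⟨fun ⟨hx, hc⟩ => ?_, fun h => ?_⟩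
    · change E x ≤ (c : EReal)
      rw [← EReal.coe_toReal hx (hbot x)]
      exact EReal.coe_le_coe_iff.mpr hc
    · have hx : E x ≠ ⊤ := (lt_of_le_of_lt h (EReal.coe_lt_top c)).ne
      exact ⟨hx, EReal.coe_le_coe_iff.mp (by rwa [EReal.coe_toReal hx (hbot x)])⟩
  rw [hpre]
  exact hE.isClosed_epigraph.preimage (continuous_id.prodMap continuous_coe_real_ereal)

lemma isClosed_epigraph_add_continuous (hF : IsClosed (epigraph D F)) {g : α → ℝ}
    (hg : Continuous g) : IsClosed (epigraph D fun x => F x + g x) := by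
  have hpre : epigraph D (fun x => F x + g x) =
      (fun p : α × ℝ => (p.1, p.2 - g p.1)) ⁻¹' epigraph D F := by
    ext p
    simp only [epigraph, mem_preimage, mem_ofPred_eq, le_sub_iff_add_le]
  rw [hpre]
  exact hF.preimage (by fun_prop)

lemma eventually_lt_of_notMem_epigraph (hF : IsClosed (epigraph D F)) {x : α} {c : ℝ}
    (hx : (x, c) ∉ epigraph D F) : ∀ᶠ w in 𝓝 x, w ∈ D → c < F w := by
  have hcont : ContinuousAt (fun w : α => (w, c)) x := by fun_prop
  filter_upwards [hcont (hF.isOpen_compl.mem_nhds hx)] with w hw hwD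
  exact lt_of_not_ge fun hle => hw ⟨hwD, hle⟩

end Epigraph

lemma dist_sq_le_two_mul_add {α : Type*} [PseudoMetricSpace α] (a b c : α) :
    dist a c ^ 2 ≤ 2 * (dist a b ^ 2 + dist b c ^ 2) :=
  (pow_le_pow_left₀ dist_nonneg (dist_triangle a b c) 2).trans add_sq_le

section Convexity

variable {Y : Type*} [MetricSpace Y] {D : Set Y} {F G : Y → ℝ} {lam μ : ℝ}

lemma Cat0.dist_sq_add_dist_sq_le (hY : Cat0 Y) (a b c d : Y) :
    dist a c ^ 2 + dist b d ^ 2 ≤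
      dist a b ^ 2 + dist b c ^ 2 + dist c d ^ 2 + dist d a ^ 2 := by
  obtain ⟨γ, hγ, rfl, rfl⟩ := hY.1 a c
  set mid := γ (1 / 2)
  have hb := hY.2 γ hγ b (1 / 2) (by norm_num)
  have hd := hY.2 γ hγ d (1 / 2) (by norm_num)
  have hbd := dist_sq_le_two_mul_add b mid d
  rw [dist_comm b mid] at hbd
  rw [dist_comm b (γ 1), dist_comm d (γ 0)]
  linarith

/-- `lam`-convexity along geodesics of the functional equal to `F` on `D` and to `+∞`
elsewhere. -/
structure LamConvexOn (D : Set Y) (F : Y → ℝ) (lam : ℝ) : Prop where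
  geodesicConvex : GeodesicConvex D
  le : ∀ γ : ℝ → Y, IsGeodesic γ → γ 0 ∈ D → γ 1 ∈ D → ∀ t ∈ Icc (0 : ℝ) 1,
    F (γ t) ≤ (1 - t) * F (γ 0) + t * F (γ 1) - lam / 2 * t * (1 - t) * dist (γ 0) (γ 1) ^ 2

lemma LamConvex.lamConvexOn {E : Y → EReal} (hE : LamConvex lam E) (hbot : ∀ y, E y ≠ ⊥) :
    LamConvexOn {z | E z ≠ ⊤} (fun z => (E z).toReal) lam := by
  have hcoe : ∀ γ : ℝ → Y, IsGeodesic γ → E (γ 0) ≠ ⊤ → E (γ 1) ≠ ⊤ → ∀ t ∈ Icc (0 : ℝ) 1,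
      E (γ t) ≤ (((1 - t) * (E (γ 0)).toReal + t * (E (γ 1)).toReal
        - lam / 2 * t * (1 - t) * dist (γ 0) (γ 1) ^ 2 : ℝ) : EReal) := by
    intro γ hγ h0 h1 t ht
    have h := hE γ hγ t ht
    rw [← EReal.coe_toReal h0 (hbot _), ← EReal.coe_toReal h1 (hbot _)] at h
    exact_mod_cast h
  have hdom : GeodesicConvex {z | E z ≠ ⊤} := fun γ hγ h0 h1 t ht =>
    ((hcoe γ hγ h0 h1 t ht).trans_lt (EReal.coe_lt_top _)).ne
  refine ⟨hdom, fun γ hγ h0 h1 t ht => ?_⟩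
  have h := hcoe γ hγ h0 h1 t ht
  rwa [← EReal.coe_toReal (hdom γ hγ h0 h1 t ht) (hbot _), EReal.coe_le_coe_iff] at h

lemma Cat0.lamConvexOn_add_dist_sq (hY : Cat0 Y) (hF : LamConvexOn D F lam) {κ : ℝ} (hκ : 0 ≤ κ)
    (x : Y) : LamConvexOn D (fun z => F z + κ / 2 * dist z x ^ 2) (lam + κ) := by
  refine ⟨hF.geodesicConvex, fun γ hγ h0 h1 t ht => ?_⟩
  have hle := hF.le γ hγ h0 h1 t ht
  have hdist := mul_le_mul_of_nonneg_left (hY.2 γ hγ x t ht) (div_nonneg hκ zero_le_two)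
  linarith

lemma GeodesicSpace.exists_lamConvexOn_le (hY : GeodesicSpace Y) (hG : LamConvexOn D G μ) {x z : Y}
    (hx : x ∈ D) (hz : z ∈ D) {t : ℝ} (ht : t ∈ Icc (0 : ℝ) 1) :
    ∃ w ∈ D, dist w x = t * dist z x ∧
      G w ≤ (1 - t) * G x + t * G z - μ / 2 * t * (1 - t) * dist z x ^ 2 := by
  obtain ⟨γ, hγ, rfl, rfl⟩ := hY x z
  refine ⟨γ t, hG.geodesicConvex γ hγ hx hz t ht, ?_, ?_⟩
  · rw [hγ t ht 0 (left_mem_Icc.mpr zero_le_one), sub_zero, abs_of_nonneg ht.1,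
      dist_comm (γ 0)]
  · rw [dist_comm (γ 1)]
    exact hG.le γ hγ hx hz t ht

lemma LamConvexOn.bddBelow (hY : GeodesicSpace Y) (hG : LamConvexOn D G μ) (hμ : 0 < μ)
    (hcl : IsClosed (epigraph D G)) : BddBelow (G '' D) := by
  obtain rfl | ⟨x, hx⟩ := D.eq_empty_or_nonempty
  · simp
  obtain ⟨r, hr, hball⟩ := Metric.eventually_nhds_iff.mp
    (eventually_lt_of_notMem_epigraph hcl (x := x) (c := G x - 1) fun h => by linarith [h.2])
  refine ⟨G x - 1 - 4 / (μ * r ^ 2), forall_mem_image.mpr fun z hz => ?_⟩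
  have hpos : 0 < 4 / (μ * r ^ 2) := by positivity
  rcases lt_or_ge (dist z x) r with hzr | hzr
  · linarith [hball hzr hz]
  have hR : 0 < dist z x := hr.trans_le hzr
  set R := dist z x
  -- Compare `z` with the point at distance `r / 2` from `x` on the geodesic from `x` to `z`.
  have ht0 : 0 < r / (2 * R) := by positivity
  have ht1 : r / (2 * R) ≤ 1 / 2 := by
    rw [div_le_div_iff₀ (by positivity) two_pos]
    linarith
  set t := r / (2 * R) with ht
  obtain ⟨w, hw, hwx, hle⟩ := hY.exists_lamConvexOn_le hG hx hz ⟨ht0.le, by linarith⟩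
  have htR : t * R = r / 2 := by
    rw [ht]
    field_simp
  have hlow : G x - 1 < G w := hball (by rw [hwx]; linarith) hw
  have hslope : μ / 4 * R ^ 2 - 2 * R / r ≤ G z - G x := by
    refine le_of_mul_le_mul_left ?_ ht0
    have hone : t * (2 * R / r) = 1 := by
      rw [ht]
      field_simp
    nlinarith [mul_nonneg (mul_nonneg hμ.le ht0.le) (sq_nonneg R)]
  have hsquare :
      μ / 4 * R ^ 2 - 2 * R / r + 4 / (μ * r ^ 2) = μ / 4 * (R - 4 / (μ * r)) ^ 2 := by
    field_simp
    ring
  have hsq_nonneg : 0 ≤ μ / 4 * (R - 4 / (μ * r)) ^ 2 := by positivity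
  linarith

lemma LamConvexOn.mul_dist_sq_le_of_lower_bound (hY : GeodesicSpace Y) (hG : LamConvexOn D G μ)
    {m : ℝ} (hm : ∀ z ∈ D, m ≤ G z) {v w : Y} (hv : v ∈ D) (hw : w ∈ D) :
    μ / 4 * dist v w ^ 2 ≤ (G v - m) + (G w - m) := by
  obtain ⟨mid, hmid, -, hle⟩ := hY.exists_lamConvexOn_le hG hw hv (t := 1 / 2) (by norm_num)
  linarith [hm mid hmid]

lemma LamConvexOn.add_dist_sq_le_of_isMinOn (hY : GeodesicSpace Y) (hG : LamConvexOn D G μ)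
    {u z : Y} (hu : u ∈ D) (hmin : IsMinOn G D u) (hz : z ∈ D) :
    G u + μ / 2 * dist u z ^ 2 ≤ G z := by
  have hslope : ∀ t ∈ Ioo (0 : ℝ) 1, G u + (1 - t) * (μ / 2 * dist u z ^ 2) ≤ G z := by
    intro t ht
    obtain ⟨w, hw, -, hle⟩ := hY.exists_lamConvexOn_le hG hu hz (Ioo_subset_Icc_self ht)
    have huw : G u ≤ G w := hmin hw
    rw [dist_comm z] at hle
    refine le_of_mul_le_mul_left ?_ ht.1
    linarith
  have hlim : Tendsto (fun t : ℝ => G u + (1 - t) * (μ / 2 * dist u z ^ 2)) (𝓝[>] 0)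
      (𝓝 (G u + (1 - 0) * (μ / 2 * dist u z ^ 2))) :=
    (Continuous.tendsto (by fun_prop) 0).mono_left nhdsWithin_le_nhds
  rw [sub_zero, one_mul] at hlim
  exact le_of_tendsto hlim (mem_of_superset (Ioo_mem_nhdsGT one_pos) hslope)

lemma LamConvexOn.exists_isMinOn [CompleteSpace Y] (hY : GeodesicSpace Y) (hG : LamConvexOn D G μ)
    (hμ : 0 < μ) (hcl : IsClosed (epigraph D G)) (hD : D.Nonempty) : ∃ u ∈ D, IsMinOn G D u := by
  have hbdd := hG.bddBelow hY hμ hcl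
  set m := sInf (G '' D)
  have hm : ∀ z ∈ D, m ≤ G z := fun z hz => csInf_le hbdd (mem_image_of_mem G hz)
  obtain ⟨s, -, hs, hsmem⟩ := exists_seq_tendsto_sInf (hD.image G) hbdd
  choose z hzD hzs using hsmem
  obtain rfl : G ∘ z = s := funext hzs
  have hcauchy : CauchySeq z := by
    refine Metric.cauchySeq_iff.mpr fun ε hε => ?_
    obtain ⟨N, hN⟩ := eventually_atTop.mp
      (hs.eventually (gt_mem_nhds (lt_add_of_pos_right m (by positivity : 0 < μ / 8 * ε ^ 2))))
    refine ⟨N, fun i hi j hj => lt_of_pow_lt_pow_left₀ 2 hε.le ?_⟩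
    refine lt_of_mul_lt_mul_left (a := μ / 4) ?_ (by positivity)
    have hi' : G (z i) < m + μ / 8 * ε ^ 2 := hN i hi
    have hj' : G (z j) < m + μ / 8 * ε ^ 2 := hN j hj
    linarith [hG.mul_dist_sq_le_of_lower_bound hY hm (hzD i) (hzD j)]
  obtain ⟨u, hu⟩ := cauchySeq_tendsto_of_complete hcauchy
  have hmem : (u, m) ∈ epigraph D G :=
    hcl.mem_of_tendsto (hu.prodMk_nhds hs) (Eventually.of_forall fun n => ⟨hzD n, le_rfl⟩)
  exact ⟨u, hmem.1, fun w hw => hmem.2.trans (hm w hw)⟩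

lemma Cat0.exists_quadratic_lower_bound (hY : Cat0 Y) (hF : LamConvexOn D F lam)
    (hcl : IsClosed (epigraph D F)) {K : ℝ} (hK : 0 ≤ K) (hlam : -lam < K) (x : Y) :
    ∃ m, ∀ z ∈ D, m - K / 2 * dist z x ^ 2 ≤ F z := by
  obtain ⟨m, hm⟩ := (hY.lamConvexOn_add_dist_sq hF hK x).bddBelow hY.1 (by linarith)
    (isClosed_epigraph_add_continuous hcl (by fun_prop))
  exact ⟨m, fun z hz => sub_le_iff_le_add.mpr (hm (mem_image_of_mem _ hz))⟩

end Convexity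

section Resolvent

variable {Y : Type*} [MetricSpace Y] {D : Set Y} {F : Y → ℝ} {lam K σ : ℝ} {J : Y → Y}

/-- `J` is a resolvent of `F` with step `σ`, that is, `J x` minimizes `F + d(·, x)² / (2σ)` over
`D`. The minimality is encoded by the discrete evolution variational inequality, which is what
all estimates start from. -/
structure IsResolvent (D : Set Y) (F : Y → ℝ) (lam σ : ℝ) (J : Y → Y) : Prop where
  pos : 0 < σ
  mem : ∀ x, J x ∈ D
  evi : ∀ x, ∀ z ∈ D, (1 + lam * σ) * dist (J x) z ^ 2 + dist (J x) x ^ 2 + 2 * σ * F (J x) ≤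
    dist x z ^ 2 + 2 * σ * F z

lemma Cat0.exists_isResolvent [CompleteSpace Y] (hY : Cat0 Y) (hF : LamConvexOn D F lam)
    (hcl : IsClosed (epigraph D F)) (hD : D.Nonempty) (hσ : 0 < σ) (hlam : 0 < 1 + lam * σ) :
    ∃ J, IsResolvent D F lam σ J := by
  have hμ : 0 < lam + σ⁻¹ := by
    refine pos_of_mul_pos_left ?_ hσ.le
    rwa [add_mul, inv_mul_cancel₀ hσ.ne', add_comm]
  have hconv := fun x => hY.lamConvexOn_add_dist_sq hF (inv_pos.mpr hσ).le x
  choose J hJ hmin using fun x => (hconv x).exists_isMinOn hY.1 hμ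
    (isClosed_epigraph_add_continuous hcl (by fun_prop)) hD
  refine ⟨J, hσ, hJ, fun x z hz => ?_⟩
  have hgrowth := (hconv x).add_dist_sq_le_of_isMinOn hY.1 (hJ x) (hmin x) hz
  rw [dist_comm x z]
  calc (1 + lam * σ) * dist (J x) z ^ 2 + dist (J x) x ^ 2 + 2 * σ * F (J x)
      = 2 * σ * (F (J x) + σ⁻¹ / 2 * dist (J x) x ^ 2 + (lam + σ⁻¹) / 2 * dist (J x) z ^ 2) := by
        field_simp
        ring
    _ ≤ 2 * σ * (F z + σ⁻¹ / 2 * dist z x ^ 2) := by gcongr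
    _ = dist z x ^ 2 + 2 * σ * F z := by
        field_simp
        ring

lemma IsResolvent.mono {lam' : ℝ} (hJ : IsResolvent D F lam σ J) (hlam : lam' ≤ lam) :
    IsResolvent D F lam' σ J := by
  refine ⟨hJ.pos, hJ.mem, fun x z hz => le_trans ?_ (hJ.evi x z hz)⟩
  have := hJ.pos
  gcongr

end Resolvent

section DiscreteEstimates

variable {Y : Type*} [MetricSpace Y] {D : Set Y} {F : Y → ℝ} {lam K σ T : ℝ} {J L : Y → Y}
  {m n : ℕ} {x x' z : Y}

lemma le_exp_mul_of_implicit_step {u b : ℕ → ℝ} {p : ℝ} (hp0 : 0 ≤ p) (hp : p ≤ 1 / 2)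
    (hu : ∀ n, 0 ≤ u n) (hb : ∀ n, 0 ≤ b n) (hstep : ∀ n, (1 - p) * u (n + 1) ≤ u n + b n)
    (n : ℕ) : u n ≤ Real.exp (2 * (n * p)) * (u 0 + 2 * ∑ i ∈ Finset.range n, b i) := by
  have hexplicit : ∀ n ≥ 0, u (n + 1) ≤ (1 + 2 * p) * u n + 2 * b n := by
    intro n _
    calc u (n + 1) ≤ (1 + 2 * p) * ((1 - p) * u (n + 1)) := by
          nlinarith [mul_nonneg (mul_nonneg hp0 (sub_nonneg.mpr hp)) (hu (n + 1))]
      _ ≤ (1 + 2 * p) * (u n + b n) := by gcongr; exact hstep n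
      _ ≤ (1 + 2 * p) * u n + 2 * b n := by nlinarith [hb n]
  have hgronwall := discrete_gronwall (hu 0) hexplicit (fun _ _ => by positivity)
    (fun k _ => mul_nonneg zero_le_two (hb k)) (Nat.zero_le n)
  rw [← Finset.range_eq_Ico, ← Finset.mul_sum, Finset.sum_const, Finset.card_range,
    nsmul_eq_mul, mul_comm] at hgronwall
  rwa [mul_left_comm]

lemma IsResolvent.iterate_mem_of_pos (hJ : IsResolvent D F lam σ J) (x : Y) (hn : 0 < n) :
    J^[n] x ∈ D := by
  obtain ⟨k, rfl⟩ := Nat.exists_eq_succ_of_ne_zero hn.ne'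
  rw [Function.iterate_succ_apply']
  exact hJ.mem _

lemma IsResolvent.iterate_mem (hJ : IsResolvent D F lam σ J) (hx : x ∈ D) (n : ℕ) :
    J^[n] x ∈ D := by
  rcases n.eq_zero_or_pos with rfl | hn
  exacts [hx, hJ.iterate_mem_of_pos x hn]

lemma IsResolvent.iterate_evi (hJ : IsResolvent D F lam σ J) {c : ℝ} (hz : z ∈ D)
    (hc : ∀ j < n, c ≤ F (J^[j + 1] x) + lam / 2 * dist (J^[j + 1] x) z ^ 2) :
    dist (J^[n] x) z ^ 2 ≤ dist x z ^ 2 + 2 * (n * σ) * (F z - c) := by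
  induction n with
  | zero => simp
  | succ n ih =>
    have hprev := ih fun j hj => hc j (hj.trans n.lt_succ_self)
    have hevi := hJ.evi (J^[n] x) z hz
    rw [← Function.iterate_succ_apply' J] at hevi
    have hlow := mul_le_mul_of_nonneg_left (hc n n.lt_succ_self) hJ.pos.le
    push_cast
    linarith [sq_nonneg (dist (J^[n + 1] x) (J^[n] x))]

section Energy

lemma IsResolvent.dist_sq_le (hJ : IsResolvent D F (-K) σ J) (hKσ : K * σ ≤ 1) (hx : x ∈ D) :
    dist x (J x) ^ 2 ≤ 2 * σ * (F x - F (J x)) := by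
  have hevi := hJ.evi x x hx
  rw [dist_self, dist_comm] at hevi
  linarith [mul_le_mul_of_nonneg_right hKσ (sq_nonneg (dist x (J x)))]

lemma IsResolvent.antitone_energy (hJ : IsResolvent D F (-K) σ J) (hKσ : K * σ ≤ 1)
    (hx : x ∈ D) : Antitone fun n => F (J^[n] x) := by
  refine antitone_nat_of_succ_le fun n => ?_
  have hstep := (sq_nonneg _).trans (hJ.dist_sq_le hKσ (hJ.iterate_mem hx n))
  rw [← Function.iterate_succ_apply' J] at hstep
  exact sub_nonneg.mp (nonneg_of_mul_nonneg_right hstep (mul_pos two_pos hJ.pos))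

lemma IsResolvent.sum_dist_sq_le (hJ : IsResolvent D F (-K) σ J) (hKσ : K * σ ≤ 1) (hx : x ∈ D)
    (n : ℕ) : ∑ j ∈ Finset.range n, dist (J^[j] x) (J^[j + 1] x) ^ 2 ≤
      2 * σ * (F x - F (J^[n] x)) := by
  calc ∑ j ∈ Finset.range n, dist (J^[j] x) (J^[j + 1] x) ^ 2
      ≤ ∑ j ∈ Finset.range n, 2 * σ * (F (J^[j] x) - F (J^[j + 1] x)) := by
        gcongr with j
        rw [Function.iterate_succ_apply']
        exact hJ.dist_sq_le hKσ (hJ.iterate_mem hx j)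
    _ = 2 * σ * (F x - F (J^[n] x)) := by
        rw [← Finset.mul_sum, Finset.sum_range_sub' (fun j => F (J^[j] x)),
          Function.iterate_zero_apply]

lemma IsResolvent.dist_iterate_sq_le (hJ : IsResolvent D F (-K) σ J) (hKσ : K * σ ≤ 1)
    (hx : x ∈ D) (n : ℕ) :
    dist x (J^[n] x) ^ 2 ≤ 2 * (n * σ) * (F x - F (J^[n] x)) := by
  calc dist x (J^[n] x) ^ 2
      ≤ (∑ j ∈ Finset.range n, dist (J^[j] x) (J^[j + 1] x)) ^ 2 := by
        gcongr
        exact dist_le_range_sum_dist (fun j => J^[j] x) n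
    _ ≤ n * ∑ j ∈ Finset.range n, dist (J^[j] x) (J^[j + 1] x) ^ 2 := by
        simpa only [Finset.card_range] using
          sq_sum_le_card_mul_sum_sq (s := Finset.range n)
            (f := fun j => dist (J^[j] x) (J^[j + 1] x))
    _ ≤ n * (2 * σ * (F x - F (J^[n] x))) := by
        gcongr
        exact hJ.sum_dist_sq_le hKσ hx n
    _ = 2 * (n * σ) * (F x - F (J^[n] x)) := by ring

lemma IsResolvent.dist_iterate_iterate_sq_le (hJ : IsResolvent D F (-K) σ J) (hKσ : K * σ ≤ 1)
    (hx : x ∈ D) (hmn : m ≤ n) :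
    dist (J^[m] x) (J^[n] x) ^ 2 ≤ 2 * ((n - m : ℕ) * σ) * (F x - F (J^[n] x)) := by
  have hdist := hJ.dist_iterate_sq_le hKσ (hJ.iterate_mem hx m) (n - m)
  rw [← Function.iterate_add_apply, Nat.sub_add_cancel hmn] at hdist
  refine hdist.trans ?_
  have hσ := hJ.pos
  gcongr
  exact hJ.antitone_energy hKσ hx (Nat.zero_le m)

end Energy

section Contraction

lemma IsResolvent.contraction (hY : Cat0 Y) (hJ : IsResolvent D F lam σ J) (x x' : Y) :
    (1 + 2 * lam * σ) * dist (J x) (J x') ^ 2 ≤ dist x x' ^ 2 := by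
  have hevi := hJ.evi x (J x') (hJ.mem x')
  have hevi' := hJ.evi x' (J x) (hJ.mem x)
  have hquad := hY.dist_sq_add_dist_sq_le x x' (J x') (J x)
  rw [dist_comm (J x') (J x)] at hevi' hquad
  rw [dist_comm (J x') x'] at hevi'
  linarith

lemma IsResolvent.iterate_contraction (hY : Cat0 Y) (hJ : IsResolvent D F (-K) σ J)
    (hK : 0 ≤ K) (hKσ : 4 * K * σ ≤ 1) (x x' : Y) (n : ℕ) :
    dist (J^[n] x) (J^[n] x') ^ 2 ≤ Real.exp (4 * K * (n * σ)) * dist x x' ^ 2 := by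
  have hgronwall := le_exp_mul_of_implicit_step (p := 2 * K * σ)
    (u := fun n => dist (J^[n] x) (J^[n] x') ^ 2) (b := 0)
    (by have := hJ.pos; positivity) (by linarith) (fun _ => by positivity) (fun _ => le_rfl)
    (fun n => by
      have := hJ.contraction hY (J^[n] x) (J^[n] x')
      simp only [Function.iterate_succ_apply', Pi.zero_apply]
      linarith) n
  have hexp : 2 * (n * (2 * K * σ)) = 4 * K * (n * σ) := by ring
  simpa only [Pi.zero_apply, Finset.sum_const_zero, mul_zero, add_zero, hexp,
    Function.iterate_zero_apply] using hgronwall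

-- By contraction the last step is, up to the exponential factor, the shortest one, hence no longer
-- than the quadratic mean of the previous ones, which the energy controls.
lemma IsResolvent.mul_dist_iterate_succ_sq_le (hY : Cat0 Y) (hJ : IsResolvent D F (-K) σ J)
    (hK : 0 ≤ K) (hKσ : 4 * K * σ ≤ 1) (hx : x ∈ D) (n : ℕ) :
    n * dist (J^[n] x) (J^[n + 1] x) ^ 2 ≤
      Real.exp (4 * K * (n * σ)) * (2 * σ * (F x - F (J^[n] x))) := by
  have hσ := hJ.pos
  have hstep : ∀ j ∈ Finset.range n, dist (J^[n] x) (J^[n + 1] x) ^ 2 ≤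
      Real.exp (4 * K * (n * σ)) * dist (J^[j] x) (J^[j + 1] x) ^ 2 := by
    intro j hj
    have hjn := (Finset.mem_range.mp hj).le
    have hcontr := hJ.iterate_contraction hY hK hKσ (J^[j] x) (J^[j + 1] x) (n - j)
    rw [← Function.iterate_add_apply, ← Function.iterate_add_apply, ← add_assoc,
      Nat.sub_add_cancel hjn] at hcontr
    refine hcontr.trans ?_
    gcongr
    exact n.sub_le j
  calc n * dist (J^[n] x) (J^[n + 1] x) ^ 2
      = ∑ _j ∈ Finset.range n, dist (J^[n] x) (J^[n + 1] x) ^ 2 := by simp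
    _ ≤ ∑ j ∈ Finset.range n,
        Real.exp (4 * K * (n * σ)) * dist (J^[j] x) (J^[j + 1] x) ^ 2 := Finset.sum_le_sum hstep
    _ ≤ Real.exp (4 * K * (n * σ)) * (2 * σ * (F x - F (J^[n] x))) := by
        rw [← Finset.mul_sum]
        gcongr
        exact hJ.sum_dist_sq_le (by linarith [mul_nonneg hK hσ.le]) hx n

lemma IsResolvent.sub_mul_dist_iterate_succ_sq_le (hY : Cat0 Y) (hJ : IsResolvent D F (-K) σ J)
    (hK : 0 ≤ K) (hKσ : 4 * K * σ ≤ 1) (hm : J^[m] x ∈ D) (hmn : m ≤ n) :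
    ((n : ℝ) - m) * dist (J^[n] x) (J^[n + 1] x) ^ 2 ≤
      Real.exp (4 * K * (n * σ)) * (2 * σ * (F (J^[m] x) - F (J^[n] x))) := by
  obtain ⟨k, rfl⟩ := Nat.exists_eq_add_of_le' hmn
  have hσ := hJ.pos
  have hstep := hJ.mul_dist_iterate_succ_sq_le hY hK hKσ hm k
  rw [← Function.iterate_add_apply, ← Function.iterate_add_apply, add_right_comm] at hstep
  have hF : 0 ≤ F (J^[m] x) - F (J^[k + m] x) := by
    rw [Function.iterate_add_apply, sub_nonneg]
    exact hJ.antitone_energy (by linarith [mul_nonneg hK hσ.le]) hm k.zero_le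
  push_cast
  rw [add_sub_cancel_right]
  refine hstep.trans ?_
  gcongr
  exact le_add_of_nonneg_right m.cast_nonneg

end Contraction

section StepRefinement

lemma IsResolvent.step_le_nat_mul (hL : IsResolvent D F lam σ L)
    (hJ : IsResolvent D F lam (m * σ) J) : σ ≤ m * σ :=
  le_mul_of_one_le_left hL.pos.le <| Nat.one_le_cast.mpr <| Nat.cast_pos.mp <|
    pos_of_mul_pos_left hJ.pos hL.pos.le

-- Compare the `m` fine steps with the endpoint `u` of the coarse step, and the coarse step with the
-- endpoint `v` of the fine ones: the values of `F` at `u` cancel in the sum of the two evolution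
-- variational inequalities, and the quadrilateral inequality absorbs the diagonals.
lemma IsResolvent.dist_coarse_fine_step_sq_le (hY : Cat0 Y) (hL : IsResolvent D F (-K) σ L)
    (hJ : IsResolvent D F (-K) (m * σ) J) (hK : 0 ≤ K) (hKσ : 2 * K * (m * σ) ≤ 1)
    (x : Y) {w : Y} (hw : w ∈ D) :
    (1 - 3 * K * (m * σ)) * dist (J x) (L^[m] w) ^ 2 ≤
      dist x w ^ 2 + 4 * (m * σ) * (F w - F (L^[m] w)) := by
  have hKL : K * σ ≤ 1 := by linarith [mul_le_mul_of_nonneg_left (hL.step_le_nat_mul hJ) hK]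
  set u := J x
  set v := L^[m] w
  have hwv : dist w v ^ 2 ≤ 2 * (m * σ) * (F w - F v) := hL.dist_iterate_sq_le hKL hw m
  have hFwv : 0 ≤ F w - F v := sub_nonneg.mpr (hL.antitone_energy hKL hw m.zero_le)
  set Q := 2 * dist v u ^ 2 + 4 * (m * σ) * (F w - F v) with hQ
  have hfine : dist v u ^ 2 ≤ dist w u ^ 2 + 2 * (m * σ) * (F u - (F v - K / 2 * Q)) := by
    refine hL.iterate_evi (hJ.mem x) fun j hj => ?_
    have hFj : F v ≤ F (L^[j + 1] w) := hL.antitone_energy hKL hw hj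
    have hjv : dist (L^[j + 1] w) v ^ 2 ≤ 2 * (m * σ) * (F w - F v) := by
      refine (hL.dist_iterate_iterate_sq_le hKL hw hj).trans ?_
      have hσ := hL.pos
      gcongr
      exact m.sub_le _
    have hju : dist (L^[j + 1] w) u ^ 2 ≤ Q := by
      linarith [dist_sq_le_two_mul_add (L^[j + 1] w) v u]
    linarith [mul_le_mul_of_nonneg_left hju hK]
  have hcoarse : (1 + -K * (m * σ)) * dist u v ^ 2 + dist u x ^ 2 + 2 * (m * σ) * F u ≤
      dist x v ^ 2 + 2 * (m * σ) * F v := hJ.evi x v (hL.iterate_mem hw m)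
  have hquad := hY.dist_sq_add_dist_sq_le x w v u
  have hKF := mul_le_mul_of_nonneg_right hKσ (mul_nonneg hJ.pos.le hFwv)
  rw [hQ] at hfine
  rw [dist_comm v u] at hfine hquad
  linarith

lemma IsResolvent.dist_coarse_fine_sq_le (hY : Cat0 Y) (hL : IsResolvent D F (-K) σ L)
    (hJ : IsResolvent D F (-K) (m * σ) J) (hK : 0 ≤ K) (hKσ : 6 * K * (m * σ) ≤ 1) (hx : x ∈ D)
    (n : ℕ) :
    dist (J^[n] x) (L^[m * n] x) ^ 2 ≤
      Real.exp (6 * K * (n * (m * σ))) * (8 * (m * σ) * (F x - F (L^[m * n] x))) := by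
  have hJpos := hJ.pos
  have hKL : K * σ ≤ 1 := by linarith [mul_le_mul_of_nonneg_left (hL.step_le_nat_mul hJ) hK]
  have hmono : Antitone fun n => F (L^[m * n] x) := fun i j hij =>
    hL.antitone_energy hKL hx (Nat.mul_le_mul_left m hij)
  have hgronwall := le_exp_mul_of_implicit_step (p := 3 * K * (m * σ))
    (u := fun n => dist (J^[n] x) (L^[m * n] x) ^ 2)
    (b := fun n => 4 * (m * σ) * (F (L^[m * n] x) - F (L^[m * (n + 1)] x)))
    (by positivity) (by linarith) (fun _ => by positivity)
    (fun n => mul_nonneg (by positivity) (sub_nonneg.mpr (hmono n.le_succ)))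
    (fun n => by
      have hstep := hL.dist_coarse_fine_step_sq_le hY hJ hK (by linarith) (J^[n] x)
        (hL.iterate_mem hx (m * n))
      rwa [← Function.iterate_succ_apply' J, ← Function.iterate_add_apply, add_comm m,
        ← Nat.mul_succ] at hstep) n
  -- The one-step errors telescope, so the total error is of order `m * σ`.
  rw [← Finset.mul_sum, Finset.sum_range_sub' (fun n => F (L^[m * n] x))] at hgronwall
  convert hgronwall using 2
  · ring_nf
  · simp
    ring

lemma IsResolvent.dist_iterate_div_sq_le (hY : Cat0 Y) (hL : IsResolvent D F (-K) σ L)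
    (hJ : IsResolvent D F (-K) (m * σ) J) (hK : 0 ≤ K) (hKσ : 6 * K * (m * σ) ≤ 1) (hx : x ∈ D)
    (hnT : n * σ ≤ T) :
    dist (J^[n / m] x) (L^[n] x) ^ 2 ≤
      20 * Real.exp (6 * K * T) * (m * σ) * (F x - F (L^[n] x)) := by
  have hJpos := hJ.pos
  have hLpos := hL.pos
  have hmσ := hL.step_le_nat_mul hJ
  have hm : 0 < m := Nat.cast_pos.mp (pos_of_mul_pos_left hJpos hLpos.le)
  have hKL : K * σ ≤ 1 := by
    linarith [mul_le_mul_of_nonneg_left hmσ hK, mul_nonneg hK hJpos.le]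
  have hle : m * (n / m) ≤ n := Nat.mul_div_le n m
  have hF : F (L^[n] x) ≤ F (L^[m * (n / m)] x) := hL.antitone_energy hKL hx hle
  have hFn : F (L^[n] x) ≤ F x := hL.antitone_energy hKL hx n.zero_le
  have hexp : 1 ≤ Real.exp (6 * K * T) :=
    Real.one_le_exp (mul_nonneg (by positivity) (le_trans (by positivity) hnT))
  have hcoarse : dist (J^[n / m] x) (L^[m * (n / m)] x) ^ 2 ≤
      Real.exp (6 * K * T) * (8 * (m * σ) * (F x - F (L^[n] x))) := by
    refine (hL.dist_coarse_fine_sq_le hY hJ hK hKσ hx (n / m)).trans ?_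
    have htime : ((n / m : ℕ) : ℝ) * (m * σ) ≤ n * σ := by
      rw [← mul_assoc, mul_comm ((n / m : ℕ) : ℝ)]
      gcongr
      exact_mod_cast hle
    have hFm : 0 ≤ F x - F (L^[m * (n / m)] x) :=
      sub_nonneg.mpr (hL.antitone_energy hKL hx (m * (n / m)).zero_le)
    gcongr
    exact htime.trans hnT
  have hremainder : dist (L^[m * (n / m)] x) (L^[n] x) ^ 2 ≤
      2 * (m * σ) * (F x - F (L^[n] x)) := by
    refine (hL.dist_iterate_iterate_sq_le hKL hx hle).trans ?_
    have hmod : n - m * (n / m) ≤ m := by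
      rw [← Nat.mod_eq_sub_mul_div]
      exact (n.mod_lt hm).le
    gcongr
  have hscale := le_mul_of_one_le_left (mul_nonneg hJpos.le (sub_nonneg.mpr hFn)) hexp
  linarith [dist_sq_le_two_mul_add (J^[n / m] x) (L^[m * (n / m)] x) (L^[n] x)]

end StepRefinement

end DiscreteEstimates

section UniformBounds

variable {Y : Type*} [MetricSpace Y] {D : Set Y} {F : Y → ℝ} {K σ m : ℝ} {J : Y → Y} {z₀ : Y}

lemma IsResolvent.dist_iterate_sq_le_exp_mul (hJ : IsResolvent D F (-K) σ J) (hK : 0 ≤ K)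
    (hKσ : 4 * K * σ ≤ 1) (hz₀ : z₀ ∈ D) (hm : ∀ z ∈ D, m - K / 2 * dist z z₀ ^ 2 ≤ F z)
    (x : Y) (n : ℕ) :
    dist (J^[n] x) z₀ ^ 2 ≤
      Real.exp (4 * K * (n * σ)) * (dist x z₀ ^ 2 + 4 * (n * σ) * (F z₀ - m)) := by
  have hσ := hJ.pos
  have hmz₀ : 0 ≤ F z₀ - m := by simpa using hm z₀ hz₀
  have hgronwall := le_exp_mul_of_implicit_step (p := 2 * K * σ)
    (u := fun n => dist (J^[n] x) z₀ ^ 2) (b := fun _ => 2 * σ * (F z₀ - m))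
    (by positivity) (by linarith) (fun _ => by positivity) (fun _ => by positivity)
    (fun n => by
      have hevi := hJ.evi (J^[n] x) z₀ hz₀
      have hlow := mul_le_mul_of_nonneg_left (hm _ (hJ.mem (J^[n] x))) hσ.le
      simp only [Function.iterate_succ_apply']
      linarith [sq_nonneg (dist (J (J^[n] x)) (J^[n] x))]) n
  rw [Finset.sum_const, Finset.card_range, nsmul_eq_mul] at hgronwall
  calc dist (J^[n] x) z₀ ^ 2 ≤ _ := hgronwall
    _ = _ := by
      rw [Function.iterate_zero_apply]
      ring_nf

lemma exists_dist_iterate_sq_le (hK : 0 ≤ K) (hz₀ : z₀ ∈ D)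
    (hm : ∀ z ∈ D, m - K / 2 * dist z z₀ ^ 2 ≤ F z) (x : Y) (T : ℝ) :
    ∃ R, ∀ σ J, IsResolvent D F (-K) σ J → 4 * K * σ ≤ 1 → ∀ n : ℕ, n * σ ≤ T →
      dist (J^[n] x) z₀ ^ 2 ≤ R := by
  refine ⟨Real.exp (4 * K * T) * (dist x z₀ ^ 2 + 4 * T * (F z₀ - m)),
    fun σ J hJ hKσ n hnT => (hJ.dist_iterate_sq_le_exp_mul hK hKσ hz₀ hm x n).trans ?_⟩
  have hσ := hJ.pos
  have hmz₀ : 0 ≤ F z₀ - m := by simpa using hm z₀ hz₀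
  gcongr

lemma exists_le_energy_iterate (hK : 0 ≤ K) (hz₀ : z₀ ∈ D)
    (hm : ∀ z ∈ D, m - K / 2 * dist z z₀ ^ 2 ≤ F z) (x : Y) (T : ℝ) :
    ∃ c, ∀ σ J, IsResolvent D F (-K) σ J → 4 * K * σ ≤ 1 → ∀ n : ℕ, n * σ ≤ T →
      J^[n] x ∈ D → c ≤ F (J^[n] x) := by
  obtain ⟨R, hR⟩ := exists_dist_iterate_sq_le hK hz₀ hm x T
  refine ⟨m - K / 2 * R, fun σ J hJ hKσ n hnT hmem => le_trans ?_ (hm _ hmem)⟩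
  gcongr
  exact hR σ J hJ hKσ n hnT

lemma exists_energy_iterate_le (hK : 0 ≤ K) (hz₀ : z₀ ∈ D)
    (hm : ∀ z ∈ D, m - K / 2 * dist z z₀ ^ 2 ≤ F z) (x : Y) {a : ℝ} (ha : 0 < a) (T : ℝ) :
    ∃ M, ∀ σ J, IsResolvent D F (-K) σ J → 4 * K * σ ≤ 1 → ∀ n : ℕ, a ≤ n * σ → n * σ ≤ T →
      F (J^[n] x) ≤ M := by
  obtain ⟨R, hR⟩ := exists_dist_iterate_sq_le hK hz₀ hm x T
  refine ⟨F z₀ + K / 2 * R + dist x z₀ ^ 2 / (2 * a), fun σ J hJ hKσ n han hnT => ?_⟩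
  have hσ := hJ.pos
  have hKσ1 : K * σ ≤ 1 := by linarith [mul_nonneg hK hσ.le]
  have hlow : ∀ j < n, F (J^[n] x) - K / 2 * R ≤
      F (J^[j + 1] x) + -K / 2 * dist (J^[j + 1] x) z₀ ^ 2 := by
    intro j hj
    have henergy := hJ.antitone_energy hKσ1 (hJ.iterate_mem_of_pos x j.succ_pos)
      (n - (j + 1)).zero_le
    simp only [← Function.iterate_add_apply, Nat.sub_add_cancel hj, zero_add] at henergy
    have hdist := hR σ J hJ hKσ (j + 1) (le_trans (by gcongr; exact hj) hnT)
    linarith [mul_le_mul_of_nonneg_left hdist hK]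
  have hevi := (sq_nonneg _).trans (hJ.iterate_evi hz₀ hlow)
  rcases le_or_gt (F (J^[n] x)) (F z₀ + K / 2 * R) with hle | hlt
  · exact hle.trans (le_add_of_nonneg_right (by positivity))
  rw [← sub_le_iff_le_add', le_div_iff₀ (by positivity)]
  nlinarith

lemma exists_dist_iterate_succ_le (hY : Cat0 Y) (hK : 0 ≤ K) (hz₀ : z₀ ∈ D)
    (hm : ∀ z ∈ D, m - K / 2 * dist z z₀ ^ 2 ≤ F z) (x : Y) {a : ℝ} (ha : 0 < a) (T : ℝ) :
    ∃ C, ∀ σ J, IsResolvent D F (-K) σ J → 4 * K * σ ≤ 1 → 2 * σ ≤ a → ∀ n : ℕ, a ≤ n * σ →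
      n * σ ≤ T → dist (J^[n] x) (J^[n + 1] x) ≤ C * σ := by
  obtain ⟨c, hc⟩ := exists_le_energy_iterate hK hz₀ hm x T
  obtain ⟨M, hM⟩ := exists_energy_iterate_le hK hz₀ hm x (a := a / 4) (by positivity) T
  refine ⟨√(4 * Real.exp (4 * K * T) * (M - c) / a), fun σ J hJ hKσ hσa n han hnT => ?_⟩
  have hσ := hJ.pos
  have hin : n / 2 ≤ n := n.div_le_self 2
  have htwo_le : 2 * ((n / 2 : ℕ) : ℝ) ≤ n := by exact_mod_cast n.mul_div_le 2
  have hle_two : (n : ℝ) ≤ 2 * (n / 2 : ℕ) + 1 := by exact_mod_cast (by lia)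
  have hai : a / 4 ≤ (n / 2 : ℕ) * σ := by nlinarith
  have hi : J^[n / 2] x ∈ D := hJ.iterate_mem_of_pos x <| Nat.cast_pos.mp <|
    pos_of_mul_pos_left (lt_of_lt_of_le (by positivity) hai) hσ.le
  have hFi := hM σ J hJ hKσ (n / 2) hai (le_trans (by gcongr) hnT)
  have hFn := hc σ J hJ hKσ n hnT (hJ.iterate_mem_of_pos x <| Nat.cast_pos.mp <|
    pos_of_mul_pos_left (ha.trans_le han) hσ.le)
  have hcM : 0 ≤ M - c := by linarith [hM σ J hJ hKσ n (by linarith) hnT]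
  rw [← div_le_iff₀ hσ]
  refine Real.le_sqrt_of_sq_le ?_
  rw [div_pow, div_le_div_iff₀ (by positivity) ha]
  set step := dist (J^[n] x) (J^[n + 1] x)
  calc step ^ 2 * a = 2 * (a / 2) * step ^ 2 := by ring
    _ ≤ 2 * ((n - (n / 2 : ℕ)) * σ) * step ^ 2 := by
        gcongr
        nlinarith
    _ = 2 * σ * ((n - (n / 2 : ℕ)) * step ^ 2) := by ring
    _ ≤ 2 * σ * (Real.exp (4 * K * (n * σ)) * (2 * σ * (F (J^[n / 2] x) - F (J^[n] x)))) :=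
        mul_le_mul_of_nonneg_left (hJ.sub_mul_dist_iterate_succ_sq_le hY hK hKσ hi hin)
          (by positivity)
    _ ≤ 2 * σ * (Real.exp (4 * K * (n * σ)) * (2 * σ * (M - c))) := by gcongr
    _ ≤ 2 * σ * (Real.exp (4 * K * T) * (2 * σ * (M - c))) := by gcongr
    _ = 4 * Real.exp (4 * K * T) * (M - c) * σ ^ 2 := by ring

lemma exists_dist_iterate_iterate_le (hY : Cat0 Y) (hK : 0 ≤ K) (hz₀ : z₀ ∈ D)
    (hm : ∀ z ∈ D, m - K / 2 * dist z z₀ ^ 2 ≤ F z) (x : Y) {a : ℝ} (ha : 0 < a) (T : ℝ) :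
    ∃ C, ∀ σ J, IsResolvent D F (-K) σ J → 4 * K * σ ≤ 1 → 2 * σ ≤ a → ∀ i j : ℕ, i ≤ j →
      a ≤ i * σ → j * σ ≤ T → dist (J^[i] x) (J^[j] x) ≤ C * (j * σ - i * σ) := by
  obtain ⟨C, hC⟩ := exists_dist_iterate_succ_le hY hK hz₀ hm x ha T
  refine ⟨C, fun σ J hJ hKσ hσa i j hij hai hjT => ?_⟩
  have hσ := hJ.pos
  calc dist (J^[i] x) (J^[j] x) ≤ ∑ _k ∈ Finset.Ico i j, C * σ :=
        dist_le_Ico_sum_of_dist_le (f := fun k => J^[k] x) hij fun {k} hik hkj =>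
          hC σ J hJ hKσ hσa k (hai.trans (by gcongr)) (le_trans (by gcongr) hjT)
    _ = C * (j * σ - i * σ) := by
        rw [Finset.sum_const, Nat.card_Ico, nsmul_eq_mul, Nat.cast_sub hij]
        ring

end UniformBounds

lemma floor_div_mul_le {s t : ℝ} (hs : 0 < s) (ht : 0 ≤ t) : ⌊t / s⌋₊ * s ≤ t :=
  (le_div_iff₀ hs).mp (Nat.floor_le (by positivity))

lemma tendsto_floor_div_mul {ι : Type*} {l : Filter ι} {σ : ι → ℝ} (hσ : Tendsto σ l (𝓝[>] 0))
    {t : ℝ} (ht : 0 ≤ t) : Tendsto (fun k => (⌊t / σ k⌋₊ : ℝ) * σ k) l (𝓝 t) := by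
  simpa only [Function.comp_def, div_inv_eq_mul, ← div_eq_mul_inv] using
    (tendsto_nat_floor_mul_div_atTop ht).comp (tendsto_inv_nhdsGT_zero.comp hσ)

lemma uniformCauchySeqOn_of_dist_sq_le {β γ : Type*} [PseudoMetricSpace γ] {f : ℕ → β → γ}
    {S : Set β} {b : ℕ → ℝ} (hb : Tendsto b atTop (𝓝 0))
    (hf : ∀ k l, k ≤ l → ∀ t ∈ S, dist (f k t) (f l t) ^ 2 ≤ b k) :
    UniformCauchySeqOn f atTop S := by
  refine Metric.uniformCauchySeqOn_iff.mpr fun ε hε => ?_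
  obtain ⟨N, hN⟩ := eventually_atTop.mp (hb.eventually (gt_mem_nhds (pow_pos hε 2)))
  have hlt : ∀ k ≥ N, ∀ l ≥ k, ∀ t ∈ S, dist (f k t) (f l t) < ε := fun k hk l hkl t ht =>
    lt_of_pow_lt_pow_left₀ 2 hε.le ((hf k l hkl t ht).trans_lt (hN k hk))
  refine ⟨N, fun k hk l hl t ht => ?_⟩
  rcases le_total k l with hkl | hlk
  · exact hlt k hk l hkl t ht
  · rw [dist_comm]
    exact hlt l hl k hlk t ht

lemma uniformCauchySeqOn_of_mem_closure {α β γ : Type*} [PseudoMetricSpace α]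
    [PseudoMetricSpace γ] {f : ℕ → α → β → γ} {A : Set α} {S : Set β} {C : ℝ}
    (hf : ∀ k, ∀ x y, ∀ t ∈ S, dist (f k x t) (f k y t) ≤ C * dist x y)
    (hA : ∀ x ∈ A, UniformCauchySeqOn (fun k => f k x) atTop S) {y : α} (hy : y ∈ closure A) :
    UniformCauchySeqOn (fun k => f k y) atTop S := by
  refine Metric.uniformCauchySeqOn_iff.mpr fun ε hε => ?_
  have hsmall : ∀ᶠ x in 𝓝 y, C * dist x y < ε / 3 :=
    (Continuous.tendsto' (by fun_prop) y 0 (by simp)).eventually (gt_mem_nhds (by positivity))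
  obtain ⟨x, hx, hxA⟩ := mem_closure_iff_nhds.mp hy _ hsmall
  obtain ⟨N, hN⟩ := Metric.uniformCauchySeqOn_iff.mp (hA x hxA) (ε / 3) (by positivity)
  refine ⟨N, fun i hi j hj t ht => ?_⟩
  calc dist (f i y t) (f j y t)
      ≤ dist (f i y t) (f i x t) + dist (f i x t) (f j x t) + dist (f j x t) (f j y t) :=
        dist_triangle4 _ _ _ _
    _ < ε / 3 + ε / 3 + ε / 3 := by
        rw [dist_comm (f i y t)]
        exact add_lt_add (add_lt_add ((hf i x y t ht).trans_lt hx) (hN i hi j hj t ht))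
          ((hf j x y t ht).trans_lt hx)
    _ = ε := add_thirds ε

lemma exists_tendstoUniformlyOn_Icc {α : Type*} [UniformSpace α] [CompleteSpace α]
    {f : ℕ → ℝ → α} (hf : ∀ T, UniformCauchySeqOn f atTop (Icc 0 T)) :
    ∃ v, ∀ T, TendstoUniformlyOn f v atTop (Icc 0 T) := by
  have hlim : ∀ t, ∃ p, 0 ≤ t → Tendsto (fun k => f k t) atTop (𝓝 p) := by
    intro t
    by_cases ht : 0 ≤ t
    · obtain ⟨p, hp⟩ := cauchySeq_tendsto_of_complete ((hf t).cauchySeq (right_mem_Icc.mpr ht))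
      exact ⟨p, fun _ => hp⟩
    · exact ⟨f 0 t, fun h => absurd h ht⟩
  choose v hv using hlim
  exact ⟨v, fun T => (hf T).tendstoUniformlyOn_of_tendsto fun t ht => hv t ht.1⟩

/-- The minimizing movement with step `σ` started at `x`, as a piecewise constant curve:
`⌊t / σ⌋` iterations of the resolvent `J` are performed up to time `t ≥ 0`. -/
noncomputable def discreteFlow {α : Type*} (σ : ℝ) (J : α → α) (x : α) (t : ℝ) : α :=
  J^[⌊t / σ⌋₊] x

lemma discreteFlow_natCast_mul {α : Type*} {σ : ℝ} (hσ : σ ≠ 0) (J : α → α) (x : α) (n : ℕ) :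
    discreteFlow σ J x (n * σ) = J^[n] x := by
  rw [discreteFlow, mul_div_cancel_right₀ _ hσ, Nat.floor_natCast]

lemma discreteFlow_of_lt {α : Type*} {σ t : ℝ} (hσ : 0 < σ) (J : α → α) (x : α)
    (ht : t < σ) : discreteFlow σ J x t = x := by
  rw [discreteFlow, Nat.floor_eq_zero.mpr ((div_lt_one hσ).mpr ht), Function.iterate_zero_apply]

section DiscreteFlow

variable {Y : Type*} [MetricSpace Y] {D : Set Y} {F : Y → ℝ} {lam K T s t : ℝ} {y z z₀ : Y}

section SingleStep

variable {σ : ℝ} {J L : Y → Y} {x : Y} {n : ℕ}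

lemma IsResolvent.dist_discreteFlow_le (hY : Cat0 Y) (hJ : IsResolvent D F (-K) σ J)
    (hK : 0 ≤ K) (hKσ : 4 * K * σ ≤ 1) (x x' : Y) (ht : t ∈ Icc 0 T) :
    dist (discreteFlow σ J x t) (discreteFlow σ J x' t) ≤ Real.exp (2 * K * T) * dist x x' := by
  refine (sq_le_sq₀ dist_nonneg (by positivity)).mp ?_
  calc dist (discreteFlow σ J x t) (discreteFlow σ J x' t) ^ 2
      ≤ Real.exp (4 * K * (⌊t / σ⌋₊ * σ)) * dist x x' ^ 2 :=
        hJ.iterate_contraction hY hK hKσ x x' _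
    _ ≤ Real.exp (4 * K * T) * dist x x' ^ 2 := by
        gcongr
        exact (floor_div_mul_le hJ.pos ht.1).trans ht.2
    _ = (Real.exp (2 * K * T) * dist x x') ^ 2 := by
        rw [mul_pow, ← Real.exp_nat_mul]
        ring_nf

lemma IsResolvent.discreteFlow_evi (hJ : IsResolvent D F lam σ J) {c : ℝ} (hs : 0 ≤ s)
    (hst : s ≤ t) (hz : z ∈ D) (hc : ∀ r ∈ Icc s t, discreteFlow σ J x r ∈ D →
      c ≤ F (discreteFlow σ J x r) + lam / 2 * dist (discreteFlow σ J x r) z ^ 2) :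
    dist (discreteFlow σ J x t) z ^ 2 ≤ dist (discreteFlow σ J x s) z ^ 2 +
      2 * (⌊t / σ⌋₊ * σ - ⌊s / σ⌋₊ * σ) * (F z - c) := by
  have hσ := hJ.pos
  set i := ⌊s / σ⌋₊
  set j := ⌊t / σ⌋₊
  have hij : i ≤ j := Nat.floor_mono (by gcongr)
  have hevi := hJ.iterate_evi (x := J^[i] x) (n := j - i) (c := c) hz fun k hk => by
    rw [← Function.iterate_add_apply, ← discreteFlow_natCast_mul hσ.ne']
    refine hc _ ⟨?_, ?_⟩ ?_
    · refine ((div_lt_iff₀ hσ).mp (Nat.lt_floor_add_one (s / σ))).le.trans ?_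
      gcongr
      exact_mod_cast (by lia)
    · refine le_trans ?_ (floor_div_mul_le hσ (hs.trans hst))
      gcongr
      lia
    · rw [discreteFlow_natCast_mul hσ.ne']
      exact hJ.iterate_mem_of_pos x (by lia)
  rw [← Function.iterate_add_apply, Nat.sub_add_cancel hij, Nat.cast_sub hij, sub_mul] at hevi
  exact hevi

lemma IsResolvent.dist_discreteFlow_sq_le (hY : Cat0 Y) (hL : IsResolvent D F (-K) σ L) {m : ℕ}
    (hJ : IsResolvent D F (-K) (m * σ) J) (hK : 0 ≤ K) (hKσ : 6 * K * (m * σ) ≤ 1) (hx : x ∈ D)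
    (ht : t ∈ Icc 0 T) :
    dist (discreteFlow (m * σ) J x t) (discreteFlow σ L x t) ^ 2 ≤
      20 * Real.exp (6 * K * T) * (m * σ) * (F x - F (discreteFlow σ L x t)) := by
  rw [discreteFlow, discreteFlow, mul_comm (m : ℝ), ← div_div, Nat.floor_div_natCast,
    mul_comm σ]
  exact hL.dist_iterate_div_sq_le hY hJ hK hKσ hx ((floor_div_mul_le hL.pos ht.1).trans ht.2)

end SingleStep

section Convergence

variable {σ : ℕ → ℝ} {J : ℕ → Y → Y} {v : ℝ → Y} {m : ℝ}

lemma uniformCauchySeqOn_discreteFlow_of_mem (hY : Cat0 Y) (hK : 0 ≤ K) (hz₀ : z₀ ∈ D)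
    (hm : ∀ z ∈ D, m - K / 2 * dist z z₀ ^ 2 ≤ F z)
    (hJ : ∀ k, IsResolvent D F (-K) (σ k) (J k)) (hKσ : ∀ k, 6 * K * σ k ≤ 1)
    (hσ : Tendsto σ atTop (𝓝[>] 0)) (hdvd : ∀ k l, k ≤ l → ∃ n : ℕ, σ k = n * σ l)
    {x : Y} (hx : x ∈ D) (T : ℝ) :
    UniformCauchySeqOn (fun k => discreteFlow (σ k) (J k) x) atTop (Icc 0 T) := by
  obtain ⟨c, hc⟩ := exists_le_energy_iterate hK hz₀ hm x T
  have hsmall := (hσ.mono_right nhdsWithin_le_nhds).const_mul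
    (20 * Real.exp (6 * K * T) * (F x - c))
  rw [mul_zero] at hsmall
  refine uniformCauchySeqOn_of_dist_sq_le hsmall fun k l hkl t ht => ?_
  have hpos := (hJ k).pos
  have henergy : c ≤ F (discreteFlow (σ l) (J l) x t) :=
    hc (σ l) (J l) (hJ l) (by linarith [hKσ l, mul_nonneg hK (hJ l).pos.le]) _
      ((floor_div_mul_le (hJ l).pos ht.1).trans ht.2) ((hJ l).iterate_mem hx _)
  obtain ⟨n, hn⟩ := hdvd k l hkl
  calc dist (discreteFlow (σ k) (J k) x t) (discreteFlow (σ l) (J l) x t) ^ 2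
      ≤ 20 * Real.exp (6 * K * T) * σ k * (F x - F (discreteFlow (σ l) (J l) x t)) := by
        rw [hn]
        exact (hJ l).dist_discreteFlow_sq_le hY (hn ▸ hJ k) hK (hn ▸ hKσ k) hx ht
    _ ≤ 20 * Real.exp (6 * K * T) * σ k * (F x - c) := by gcongr
    _ = 20 * Real.exp (6 * K * T) * (F x - c) * σ k := by ring

lemma uniformCauchySeqOn_discreteFlow (hY : Cat0 Y) (hK : 0 ≤ K) (hz₀ : z₀ ∈ D)
    (hm : ∀ z ∈ D, m - K / 2 * dist z z₀ ^ 2 ≤ F z)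
    (hJ : ∀ k, IsResolvent D F (-K) (σ k) (J k)) (hKσ : ∀ k, 6 * K * σ k ≤ 1)
    (hσ : Tendsto σ atTop (𝓝[>] 0)) (hdvd : ∀ k l, k ≤ l → ∃ n : ℕ, σ k = n * σ l)
    (hy : y ∈ closure D) (T : ℝ) :
    UniformCauchySeqOn (fun k => discreteFlow (σ k) (J k) y) atTop (Icc 0 T) :=
  uniformCauchySeqOn_of_mem_closure (f := fun k => discreteFlow (σ k) (J k))
    (fun k x x' _ ht => (hJ k).dist_discreteFlow_le hY hK
      (by linarith [hKσ k, mul_nonneg hK (hJ k).pos.le]) x x' ht)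
    (fun _ hx => uniformCauchySeqOn_discreteFlow_of_mem hY hK hz₀ hm hJ hKσ hσ hdvd hx T) hy

lemma tendsto_nhdsGT_zero_of_tendstoUniformlyOn (hσ : ∀ k, 0 < σ k) (hT : 0 < T)
    (hv : TendstoUniformlyOn (fun k => discreteFlow (σ k) (J k) y) v atTop (Icc 0 T)) :
    Tendsto v (𝓝[>] 0) (𝓝 y) := by
  refine Metric.tendsto_nhds.mpr fun ε hε => ?_
  obtain ⟨k, hk⟩ := (Metric.tendstoUniformlyOn_iff.mp hv ε hε).exists
  filter_upwards [Ioo_mem_nhdsGT hT, Ioo_mem_nhdsGT (hσ k)] with t htT htσ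
  simpa only [discreteFlow_of_lt (hσ k) (J k) y htσ.2] using hk t (Ioo_subset_Icc_self htT)

lemma locallyLipschitzOn_of_tendsto_discreteFlow (hY : Cat0 Y) (hK : 0 ≤ K) (hz₀ : z₀ ∈ D)
    (hm : ∀ z ∈ D, m - K / 2 * dist z z₀ ^ 2 ≤ F z)
    (hJ : ∀ k, IsResolvent D F (-K) (σ k) (J k)) (hKσ : ∀ k, 4 * K * σ k ≤ 1)
    (hσ : Tendsto σ atTop (𝓝[>] 0))
    (hv : ∀ t > 0, Tendsto (fun k => discreteFlow (σ k) (J k) y t) atTop (𝓝 (v t))) :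
    LocallyLipschitzOn (Ioi 0) v := by
  intro a ha
  have ha0 : 0 < a := ha
  obtain ⟨C, hC⟩ := exists_dist_iterate_iterate_le hY hK hz₀ hm y (a := a / 4) (by positivity)
    (a + 1)
  have hlip : ∀ s t, a / 2 ≤ s → s ≤ t → t ≤ a + 1 → dist (v s) (v t) ≤ C * (t - s) := by
    intro s t has hst htT
    have hs : 0 < s := by linarith
    refine le_of_tendsto_of_tendsto ((hv s hs).dist (hv t (hs.trans_le hst)))
      (((tendsto_floor_div_mul hσ (hs.trans_le hst).le).sub
        (tendsto_floor_div_mul hσ hs.le)).const_mul C) ?_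
    filter_upwards [(tendsto_floor_div_mul hσ hs.le).eventually
        (lt_mem_nhds (by linarith : a / 4 < s)),
      (hσ.mono_right nhdsWithin_le_nhds).eventually (gt_mem_nhds (by positivity : 0 < a / 8))]
      with k hsk hσk
    have hpos := (hJ k).pos
    exact hC (σ k) (J k) (hJ k) (hKσ k) (by linarith) _ _ (Nat.floor_mono (by gcongr)) hsk.le
      ((floor_div_mul_le hpos (hs.trans_le hst).le).trans htT)
  refine ⟨C.toNNReal, Icc (a / 2) (a + 1),
    mem_nhdsWithin_of_mem_nhds (Icc_mem_nhds (by linarith) (by linarith)),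
    LipschitzOnWith.of_dist_le' fun s hs t ht => ?_⟩
  rw [Real.dist_eq]
  rcases le_total s t with hst | hts
  · rw [abs_sub_comm, abs_of_nonneg (sub_nonneg.mpr hst)]
    exact hlip s t hs.1 hst ht.2
  · rw [dist_comm, abs_of_nonneg (sub_nonneg.mpr hts)]
    exact hlip t s ht.1 hts hs.2

lemma dist_sq_le_of_tendsto_discreteFlow (hJ : ∀ k, IsResolvent D F lam (σ k) (J k))
    (hσ : Tendsto σ atTop (𝓝[>] 0)) {c : ℝ} (hs : 0 ≤ s) (hst : s ≤ t) (hz : z ∈ D)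
    (hv : ∀ r ∈ Icc s t, Tendsto (fun k => discreteFlow (σ k) (J k) y r) atTop (𝓝 (v r)))
    (hc : ∀ᶠ k in atTop, ∀ r ∈ Icc s t, discreteFlow (σ k) (J k) y r ∈ D →
      c ≤ F (discreteFlow (σ k) (J k) y r) +
        lam / 2 * dist (discreteFlow (σ k) (J k) y r) z ^ 2) :
    dist (v t) z ^ 2 ≤ dist (v s) z ^ 2 + 2 * (t - s) * (F z - c) := by
  have hfloor := (tendsto_floor_div_mul hσ (hs.trans hst)).sub (tendsto_floor_div_mul hσ hs)
  refine le_of_tendsto_of_tendsto (((hv t ⟨hst, le_rfl⟩).dist tendsto_const_nhds).pow 2)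
    ((((hv s ⟨le_rfl, hst⟩).dist tendsto_const_nhds).pow 2).add
      ((hfloor.const_mul 2).mul_const (F z - c))) ?_
  filter_upwards [hc] with k hck
  exact (hJ k).discreteFlow_evi hs hst hz hck

lemma deriv_le_of_notMem_epigraph (hJ : ∀ k, IsResolvent D F lam (σ k) (J k))
    (hσ : Tendsto σ atTop (𝓝[>] 0)) (hcl : IsClosed (epigraph D F))
    (hv : TendstoUniformlyOn (fun k => discreteFlow (σ k) (J k) y) v atTop (Icc 0 T))
    (ht : t ∈ Ioo 0 T) (hcont : ContinuousAt v t) (hz : z ∈ D) {d' : ℝ}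
    (hd' : HasDerivAt (fun s => dist (v s) z ^ 2 / 2) d' t) {c : ℝ}
    (hc : (v t, c) ∉ epigraph D fun w => F w + lam / 2 * dist w z ^ 2) : d' ≤ F z - c := by
  have hjoint : Tendsto (fun q : ℕ × ℝ => discreteFlow (σ q.1) (J q.1) y q.2) (atTop ×ˢ 𝓝 t)
      (𝓝 (v t)) := by
    have hT : 𝓝[Icc 0 T] t = 𝓝 t := nhdsWithin_eq_nhds.mpr (Icc_mem_nhds ht.1 ht.2)
    have hunif : TendstoUniformlyOn (fun q : ℕ × ℝ => discreteFlow (σ q.1) (J q.1) y) v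
        (atTop ×ˢ 𝓝 t) (Icc 0 T) := fun u hu => (hv u hu).prod_inl _
    exact hunif.tendsto_comp hcont.continuousWithinAt (hT ▸ tendsto_snd)
  have henergy := eventually_lt_of_notMem_epigraph
    (isClosed_epigraph_add_continuous hcl (by fun_prop)) hc
  obtain ⟨A, hA, B, hB, hAB⟩ := mem_prod_iff.mp (hjoint.eventually henergy)
  obtain ⟨η, hη, hball⟩ := Metric.mem_nhds_iff.mp hB
  refine le_of_tendsto hd'.tendsto_slope_zero_right ?_
  have hh : ∀ᶠ h in 𝓝[>] 0, h < min η (T - t) :=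
    nhdsWithin_le_nhds (gt_mem_nhds (lt_min hη (sub_pos.mpr ht.2)))
  filter_upwards [hh, self_mem_nhdsWithin] with h hlt hpos
  have hpos : 0 < h := hpos
  have hnear : ∀ r ∈ Icc t (t + h), r ∈ Metric.ball t η := fun r hr => by
    rw [Real.ball_eq_Ioo]
    exact ⟨by linarith [hr.1], by linarith [hr.2, min_le_left η (T - t)]⟩
  have hdecay := dist_sq_le_of_tendsto_discreteFlow (c := c) (v := v) hJ hσ ht.1.le
    (le_add_of_nonneg_right hpos.le : t ≤ t + h) hz
    (fun r hr => hv.tendsto_at ⟨ht.1.le.trans hr.1, by linarith [hr.2, min_le_right η (T - t)]⟩)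
    (mem_of_superset hA fun k hk r hr hrD =>
      (hAB (mk_mem_prod hk (hball (hnear r hr))) hrD).le)
  rw [smul_eq_mul, inv_mul_le_iff₀ hpos]
  linarith

lemma evi_of_tendstoUniformlyOn_discreteFlow (hJ : ∀ k, IsResolvent D F lam (σ k) (J k))
    (hσ : Tendsto σ atTop (𝓝[>] 0)) (hcl : IsClosed (epigraph D F))
    (hv : TendstoUniformlyOn (fun k => discreteFlow (σ k) (J k) y) v atTop (Icc 0 T))
    (ht : t ∈ Ioo 0 T) (hcont : ContinuousAt v t) (hz : z ∈ D) {d' : ℝ}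
    (hd' : HasDerivAt (fun s => dist (v s) z ^ 2 / 2) d' t) :
    v t ∈ D ∧ d' + F (v t) + lam / 2 * dist (v t) z ^ 2 ≤ F z := by
  suffices hmem : (v t, F z - d') ∈ epigraph D fun w => F w + lam / 2 * dist w z ^ 2 from
    ⟨hmem.1, by linarith [hmem.2]⟩
  by_contra hnot
  have hclosed : IsClosed (epigraph D fun w => F w + lam / 2 * dist w z ^ 2) :=
    isClosed_epigraph_add_continuous hcl (by fun_prop)
  have hopen : ∀ᶠ c in 𝓝 (F z - d'), (v t, c) ∉ epigraph D fun w => F w + lam / 2 * dist w z ^ 2 :=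
    (Continuous.prodMk_right (v t)).continuousAt (hclosed.isOpen_compl.mem_nhds hnot)
  obtain ⟨c, hlt, hc⟩ := hopen.exists_gt
  linarith [deriv_le_of_notMem_epigraph hJ hσ hcl hv ht hcont hz hd' hc]

end Convergence

end DiscreteFlow

section LocallyLipschitz

lemma locAbsCont_of_locallyLipschitzOn {Y : Type*} [MetricSpace Y] {v : ℝ → Y}
    (hv : LocallyLipschitzOn (Ioi 0) v) : LocAbsCont v := by
  intro a b ha _
  obtain ⟨C, hC⟩ := (hv.mono fun _ hr => ha.trans_le hr.1).exists_lipschitzOnWith_of_compact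
    (isCompact_Icc (a := a) (b := b))
  refine ⟨fun _ => C, fun _ => C.coe_nonneg, integrableOn_const measure_Icc_lt_top.ne,
    fun s hs t ht hst => (hC.dist_le_mul s hs t ht).trans_eq ?_⟩
  rw [intervalIntegral.integral_const, smul_eq_mul, Real.dist_eq, abs_sub_comm,
    abs_of_nonneg (sub_nonneg.mpr hst), mul_comm]

lemma ae_differentiableAt_of_locallyLipschitzOn {V W : Type*} [NormedAddCommGroup V]
    [NormedSpace ℝ V] [FiniteDimensional ℝ V] [MeasurableSpace V] [BorelSpace V]
    [NormedAddCommGroup W] [NormedSpace ℝ W] [FiniteDimensional ℝ W] {μ : Measure V}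
    [μ.IsAddHaarMeasure] {U : Set V} (hU : IsOpen U) {f : V → W} (hf : LocallyLipschitzOn U f) :
    ∀ᵐ x ∂μ.restrict U, DifferentiableAt ℝ f x := by
  have hlocal : ∀ x ∈ U, ∃ s ∈ 𝓝 x, ∀ᵐ w ∂μ, w ∈ s → DifferentiableAt ℝ f w := by
    intro x hx
    obtain ⟨C, s, hs, hC⟩ := hf hx
    rw [hU.nhdsWithin_eq hx] at hs
    refine ⟨interior s, interior_mem_nhds.mpr hs, ?_⟩
    filter_upwards [hC.ae_differentiableWithinAt_of_mem] with w hw hws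
    exact (hw (interior_subset hws)).differentiableAt (mem_interior_iff_mem_nhds.mp hws)
  rw [ae_restrict_iff' hU.measurableSet, ae_iff]
  refine measure_null_of_locally_null _ fun x hx => ?_
  obtain ⟨s, hs, hdiff⟩ := hlocal x (Classical.not_imp.mp hx).1
  refine ⟨s ∩ {w | ¬(w ∈ U → DifferentiableAt ℝ f w)},
    inter_mem (mem_nhdsWithin_of_mem_nhds hs) self_mem_nhdsWithin, ?_⟩
  refine measure_mono_null ?_ (ae_iff.mp hdiff)
  exact fun w hw h => hw.2 fun _ => h hw.1

lemma ae_differentiableAt_dist_sq {Y : Type*} [MetricSpace Y] {v : ℝ → Y}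
    (hv : LocallyLipschitzOn (Ioi 0) v) (z : Y) :
    ∀ᵐ t ∂volume.restrict (Ioi 0), DifferentiableAt ℝ (fun s => dist (v s) z ^ 2 / 2) t := by
  have hdist : LocallyLipschitzOn (Ioi 0) fun s => dist (v s) z := fun t ht => by
    obtain ⟨C, s, hs, hC⟩ := hv ht
    exact ⟨1 * C, s, hs, (LipschitzWith.dist_left z).comp_lipschitzOnWith hC⟩
  filter_upwards [ae_differentiableAt_of_locallyLipschitzOn isOpen_Ioi hdist] with t ht
  exact (ht.pow 2).div_const 2

end LocallyLipschitz

lemma Cat0.exists_isResolvent_dyadic {Y : Type*} [MetricSpace Y] [CompleteSpace Y] {D : Set Y}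
    {F : Y → ℝ} {lam : ℝ} (hY : Cat0 Y) (hF : LamConvexOn D F lam) (hcl : IsClosed (epigraph D F))
    (hD : D.Nonempty) {K : ℝ} (hK : 0 < K) (hlam : -lam < K) :
    ∃ (σ : ℕ → ℝ) (J : ℕ → Y → Y), (∀ k, IsResolvent D F lam (σ k) (J k)) ∧
      (∀ k, 6 * K * σ k ≤ 1) ∧ Tendsto σ atTop (𝓝[>] 0) ∧
      ∀ k l, k ≤ l → ∃ n : ℕ, σ k = n * σ l := by
  set σ : ℕ → ℝ := fun k => (6 * K)⁻¹ * (1 / 2) ^ k with hσ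
  have hpos : ∀ k, 0 < σ k := fun k => by positivity
  have hKσ : ∀ k, 6 * K * σ k ≤ 1 := fun k => by
    rw [hσ, mul_inv_cancel_left₀ (by positivity)]
    exact pow_le_one₀ (by norm_num) (by norm_num)
  choose J hJ using fun k => hY.exists_isResolvent hF hcl hD (hpos k)
    (by nlinarith [hKσ k, hpos k, mul_pos (neg_lt_iff_pos_add'.mp hlam) (hpos k)])
  refine ⟨σ, J, hJ, hKσ, tendsto_nhdsWithin_iff.mpr ⟨?_, Eventually.of_forall hpos⟩, ?_⟩
  · have hpow : Tendsto (fun k : ℕ => (1 / 2 : ℝ) ^ k) atTop (𝓝 0) :=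
      tendsto_pow_atTop_nhds_zero_of_lt_one (by norm_num) (by norm_num)
    simpa only [mul_zero] using hpow.const_mul (6 * K)⁻¹
  · intro k l hkl
    obtain ⟨i, rfl⟩ := Nat.exists_eq_add_of_le hkl
    refine ⟨2 ^ i, ?_⟩
    simp only [hσ, pow_add, Nat.cast_pow, Nat.cast_ofNat, one_div, inv_pow]
    field_simp

lemma LamConvexOn.exists_evi_flow {Y : Type*} [MetricSpace Y] [CompleteSpace Y] {D : Set Y}
    {F : Y → ℝ} {lam : ℝ} (hY : Cat0 Y) (hF : LamConvexOn D F lam) (hcl : IsClosed (epigraph D F))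
    {y : Y} (hy : y ∈ closure D) :
    ∃ v : ℝ → Y, LocallyLipschitzOn (Ioi 0) v ∧ Tendsto v (𝓝[>] 0) (𝓝 y) ∧
      ∀ z ∈ D, ∀ t > 0, ∀ d', HasDerivAt (fun s => dist (v s) z ^ 2 / 2) d' t →
        v t ∈ D ∧ d' + F (v t) + lam / 2 * dist (v t) z ^ 2 ≤ F z := by
  obtain ⟨z₀, hz₀⟩ := closure_nonempty_iff.mp ⟨y, hy⟩
  obtain ⟨K, hK⟩ := exists_gt (max 0 (-lam))
  obtain ⟨hK0, hlam⟩ := max_lt_iff.mp hK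
  obtain ⟨m, hm⟩ := hY.exists_quadratic_lower_bound hF hcl hK0.le hlam z₀
  obtain ⟨σ, J, hJ, hKσ, hσ, hdvd⟩ := hY.exists_isResolvent_dyadic hF hcl ⟨z₀, hz₀⟩ hK0 hlam
  have hJK := fun k => (hJ k).mono (neg_lt.mp hlam).le
  obtain ⟨v, hv⟩ := exists_tendstoUniformlyOn_Icc
    (uniformCauchySeqOn_discreteFlow hY hK0.le hz₀ hm hJK hKσ hσ hdvd hy)
  have hlip := locallyLipschitzOn_of_tendsto_discreteFlow hY hK0.le hz₀ hm hJK
    (fun k => by linarith [hKσ k, mul_pos hK0 (hJ k).pos]) hσ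
    fun t ht => (hv t).tendsto_at (right_mem_Icc.mpr (le_of_lt ht))
  refine ⟨v, hlip, tendsto_nhdsGT_zero_of_tendstoUniformlyOn (fun k => (hJ k).pos) one_pos (hv 1),
    fun z hz t ht d' hd' => ?_⟩
  exact evi_of_tendstoUniformlyOn_discreteFlow hJ hσ hcl (hv (t + 1)) ⟨ht, lt_add_one t⟩
    (hlip.continuousOn.continuousAt (Ioi_mem_nhds ht)) hz hd'

/-- **Existence of gradient flow trajectories**: for a `λ`-convex lower semicontinuous
functional on a CAT(0) space and any starting point in the closure of the domain, there
exists a gradient flow trajectory. -/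
theorem gradientFlow_exists {Y : Type*} [MetricSpace Y] [CompleteSpace Y]
    (hY : Cat0 Y) (lam : ℝ) (E : Y → EReal) (hbot : ∀ y, E y ≠ ⊥)
    (hconv : LamConvex lam E) (hlsc : LowerSemicontinuous E)
    (y : Y) (hy : y ∈ closure {z : Y | E z ≠ ⊤}) :
    ∃ ytraj : ℝ → Y, GradientFlow lam E y ytraj := by
  obtain ⟨v, hlip, hlim, hevi⟩ := (hconv.lamConvexOn hbot).exists_evi_flow hY
    (isClosed_epigraph_toReal hlsc hbot) hy
  refine ⟨v, locAbsCont_of_locallyLipschitzOn hlip, hlim, fun z => ?_⟩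
  filter_upwards [ae_differentiableAt_dist_sq hlip z, ae_restrict_mem measurableSet_Ioi]
    with t hdiff ht
  refine ⟨_, hdiff.hasDerivAt, ?_⟩
  by_cases hz : E z = ⊤
  · exact hz ▸ le_top
  obtain ⟨hvt, hle⟩ := hevi z hz t ht _ hdiff.hasDerivAt
  rw [← EReal.coe_toReal hvt (hbot _), ← EReal.coe_toReal hz (hbot _)]
  exact_mod_cast hle
end

section
/- Let Y be a CAT(0) space, E : Y → ℝ ∪ {+∞} a λ-convex and lower semicontinuous functional with D(E) nonempty, λ ∈ ℝ, and let (y_t), (z_t) be gradient flow trajectories for E starting from y, z ∈ Y respectively. Then d(y_t, z_t) ≤ e^{−λ(t−s)}·d(y_s, z_s) for all t ≥ s > 0. In particular, the gradient flow trajectory starting from a given point is unique. -/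
open Filter MeasureTheory Set Bornology
open scoped ENNReal Topology NNReal

/-!
Integrating the EVI against the weight `exp (lam * r)` bounds the change of
`exp (lam * r) * d²(y_r, w) / 2` over `[u, v]` by `(E w - c) * ∫ exp (lam * r)` as soon as `E ≥ c`
along `y` on `(u, v]`. Applied from the last time at which the energy is at most a given level,
with `w` the position at that time, this shows that the energy is nonincreasing along `y`, so
one may take `c = E (y v)`.

For two trajectories, test `y` with `z_v` and `z` with `y_u`, and average with the estimate
obtained by exchanging `y` and `z`: with `P r = E (y_r) + E (z_r)`, the increment of
`(exp (lam * r) * d(y_r, z_r))²` over `[u, v]` is at most a constant times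
`(v - u) * (P u - P v)`. Over a subdivision of `[s, t]` of mesh `h` these bounds telescope
to `O(h)`.
-/

section AbsolutelyContinuous

variable {X : Type*} [PseudoMetricSpace X] {a b : ℝ}

theorem absolutelyContinuousOnInterval_of_dist_le {X' : Type*} [PseudoMetricSpace X']
    {f : ℝ → X} {g : ℝ → X'} (hg : AbsolutelyContinuousOnInterval g a b)
    (h : ∀ p ∈ uIcc a b, ∀ q ∈ uIcc a b, p ≤ q → dist (f p) (f q) ≤ dist (g p) (g q)) :
    AbsolutelyContinuousOnInterval f a b := by
  have h_all : ∀ p ∈ uIcc a b, ∀ q ∈ uIcc a b, dist (f p) (f q) ≤ dist (g p) (g q) := by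
    intro p hp q hq
    rcases le_total p q with hpq | hqp
    · exact h p hp q hq hpq
    · rw [dist_comm (f p), dist_comm (g p)]
      exact h q hq p hp hqp
  rw [absolutelyContinuousOnInterval_iff] at hg ⊢
  intro ε hε
  obtain ⟨δ, hδ, hgδ⟩ := hg ε hε
  refine ⟨δ, hδ, fun I hI hIδ => (Finset.sum_le_sum fun i hi => ?_).trans_lt (hgδ I hI hIδ)⟩
  exact h_all _ (hI.1 i hi).1 _ (hI.1 i hi).2

theorem absolutelyContinuousOnInterval_dist {f : ℝ → X}
    (hf : AbsolutelyContinuousOnInterval f a b) (w : X) :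
    AbsolutelyContinuousOnInterval (fun r => dist (f r) w) a b :=
  absolutelyContinuousOnInterval_of_dist_le hf fun p _ q _ _ => by
    rw [Real.dist_eq]
    exact abs_dist_sub_le _ _ _

theorem absolutelyContinuousOnInterval_half_sq_dist {f : ℝ → X}
    (hf : AbsolutelyContinuousOnInterval f a b) (w : X) :
    AbsolutelyContinuousOnInterval (fun r => dist (f r) w ^ 2 / 2) a b := by
  have hdist := absolutelyContinuousOnInterval_dist hf w
  convert! (hdist.fun_mul hdist).const_mul (1 / 2) using 2 with r
  ring

theorem continuousOn_of_absolutelyContinuousOnInterval {f : ℝ → X}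
    (hf : AbsolutelyContinuousOnInterval f a b) : ContinuousOn f (uIcc a b) := fun q hq =>
  tendsto_iff_dist_tendsto_zero.2 <| by
    simpa only [dist_self] using
      ((absolutelyContinuousOnInterval_dist hf (f q)).continuousOn q hq).tendsto

end AbsolutelyContinuous

theorem AbsContOn.absolutelyContinuousOnInterval {Y : Type*} [MetricSpace Y] {y : ℝ → Y}
    {a b : ℝ} (hab : a ≤ b) (hy : AbsContOn y a b) : AbsolutelyContinuousOnInterval y a b := by
  obtain ⟨g, -, hg_int, hg⟩ := hy
  have hint : IntervalIntegrable g volume a b :=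
    (intervalIntegrable_iff_integrableOn_Icc_of_le hab).2 hg_int
  have hint_left : ∀ r ∈ Icc a b, IntervalIntegrable g volume a r := fun r hr =>
    hint.mono_set (by rw [uIcc_of_le hab, uIcc_of_le hr.1]; exact Icc_subset_Icc_right hr.2)
  refine absolutelyContinuousOnInterval_of_dist_le
    (hint.absolutelyContinuousOnInterval_intervalIntegral left_mem_uIcc) ?_
  rw [uIcc_of_le hab]
  intro p hp q hq hpq
  rw [dist_comm (∫ v in a..p, g v), Real.dist_eq,
    intervalIntegral.integral_interval_sub_left (hint_left q hq) (hint_left p hp)]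
  exact (hg p hp q hq hpq).trans (le_abs_self _)

theorem mul_exp_sub_mul_exp_le_of_ae_deriv_add_mul_le {f : ℝ → ℝ} {lam C u v : ℝ} (huv : u ≤ v)
    (hf : AbsolutelyContinuousOnInterval f u v)
    (hderiv : ∀ᵐ r, r ∈ Ioc u v → deriv f r + lam * f r ≤ C) :
    f v * Real.exp (lam * v) - f u * Real.exp (lam * u) ≤
      C * ∫ r in u..v, Real.exp (lam * r) := by
  have hexp_deriv : ∀ r, HasDerivAt (fun r => Real.exp (lam * r)) (Real.exp (lam * r) * lam) r :=
    fun r => by simpa using ((hasDerivAt_id r).const_mul lam).exp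
  have hexp : AbsolutelyContinuousOnInterval (fun r => Real.exp (lam * r)) u v :=
    ContDiffOn.absolutelyContinuousOnInterval (by fun_prop)
  have hderiv_int : IntervalIntegrable (fun r => deriv f r * Real.exp (lam * r) +
      f r * deriv (fun r => Real.exp (lam * r)) r) volume u v :=
    (hf.intervalIntegrable_deriv.mul_continuousOn hexp.continuousOn).add
      (hexp.intervalIntegrable_deriv.continuousOn_mul hf.continuousOn)
  rw [← hf.integral_deriv_mul_eq_sub hexp, ← intervalIntegral.integral_const_mul]
  refine intervalIntegral.integral_mono_ae_restrict huv hderiv_int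
    (by apply Continuous.intervalIntegrable; fun_prop) ?_
  rw [← restrict_Ioc_eq_restrict_Icc]
  filter_upwards [ae_restrict_of_ae hderiv, ae_restrict_mem measurableSet_Ioc] with r hr hr_mem
  calc deriv f r * Real.exp (lam * r) + f r * deriv (fun r => Real.exp (lam * r)) r
      = (deriv f r + lam * f r) * Real.exp (lam * r) := by rw [(hexp_deriv r).deriv]; ring
    _ ≤ C * Real.exp (lam * r) := by gcongr; exact hr hr_mem

theorem le_of_forall_sub_le_mul_sub {f Q : ℝ → ℝ} {a b : ℝ} (hab : a ≤ b)
    (h : ∀ u v, a ≤ u → u ≤ v → v ≤ b → f v - f u ≤ (v - u) * (Q u - Q v)) : f b ≤ f a := by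
  have hbound : ∀ n : ℕ, f b - f a ≤ (b - a) * (Q a - Q b) / (n + 1) := by
    intro n
    let x : ℕ → ℝ := fun i => a + i * ((b - a) / (n + 1))
    have hx_zero : x 0 = a := by simp [x]
    have hx_last : x (n + 1) = b := by
      dsimp only [x]
      push_cast
      field_simp
      ring
    have hx_step : ∀ i, x (i + 1) - x i = (b - a) / (n + 1) := fun i => by
      dsimp only [x]
      push_cast
      ring
    have hx_mono : Monotone x := monotone_nat_of_le_succ fun i =>
      sub_nonneg.1 (hx_step i ▸ div_nonneg (sub_nonneg.2 hab) n.cast_add_one_pos.le)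
    calc f b - f a = ∑ i ∈ Finset.range (n + 1), (f (x (i + 1)) - f (x i)) := by
          rw [Finset.sum_range_sub (fun i => f (x i)), hx_zero, hx_last]
      _ ≤ ∑ i ∈ Finset.range (n + 1), (b - a) / (n + 1) * (Q (x i) - Q (x (i + 1))) := by
          refine Finset.sum_le_sum fun i hi => ?_
          rw [← hx_step i]
          exact h _ _ (hx_zero ▸ hx_mono i.zero_le) (hx_mono i.le_succ)
            (hx_last ▸ hx_mono (Finset.mem_range.1 hi))
      _ = (b - a) * (Q a - Q b) / (n + 1) := by
          rw [← Finset.mul_sum, Finset.sum_range_sub' (fun i => Q (x i)), hx_zero, hx_last]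
          ring
  have hlim := (tendsto_const_div_atTop_nhds_zero_nat ((b - a) * (Q a - Q b))).comp
    (tendsto_add_atTop_nat 1)
  exact sub_nonpos.1 (ge_of_tendsto' hlim fun n => by simpa using hbound n)

namespace EVI

variable {Y : Type*} [MetricSpace Y] {lam : ℝ} {E : Y → EReal} {y z : ℝ → Y}

theorem half_sq_dist_mul_exp_sub_le (hy : EVI lam E y) (hyac : LocAbsCont y) {w : Y}
    {u v c e : ℝ} (hu : 0 < u) (huv : u ≤ v) (hw : E w ≤ e)
    (hc : ∀ r ∈ Ioc u v, (c : EReal) ≤ E (y r)) :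
    dist (y v) w ^ 2 / 2 * Real.exp (lam * v) - dist (y u) w ^ 2 / 2 * Real.exp (lam * u) ≤
      (e - c) * ∫ r in u..v, Real.exp (lam * r) := by
  have hAC := absolutelyContinuousOnInterval_half_sq_dist
    ((hyac u v hu huv).absolutelyContinuousOnInterval huv) w
  refine mul_exp_sub_mul_exp_le_of_ae_deriv_add_mul_le huv hAC ?_
  filter_upwards [(ae_restrict_iff' measurableSet_Ioi).1 (hy w)] with r hr hr_mem
  obtain ⟨d', hd', hle⟩ := hr (hu.trans hr_mem.1)
  have hle_real : d' + c + lam / 2 * dist (y r) w ^ 2 ≤ e := by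
    have : (d' : EReal) + c + ((lam / 2 * dist (y r) w ^ 2 : ℝ) : EReal) ≤ e :=
      (by gcongr; exact hc r hr_mem : _ ≤ _).trans (hle.trans hw)
    exact_mod_cast this
  rw [hd'.deriv]
  linarith

theorem antitoneOn_energy (hlsc : LowerSemicontinuous E) (hy : EVI lam E y)
    (hyac : LocAbsCont y) : AntitoneOn (fun t => E (y t)) (Ioi 0) := by
  intro s hs t _ hst
  refine EReal.le_of_forall_lt_iff_le.1 fun c hsc => ?_
  have hcont : ContinuousOn y (Icc s t) := by
    rw [← uIcc_of_le hst]
    exact continuousOn_of_absolutelyContinuousOnInterval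
      ((hyac s t hs hst).absolutelyContinuousOnInterval hst)
  have hcompact : IsCompact (Icc s t ∩ y ⁻¹' (E ⁻¹' Iic (c : EReal))) :=
    isCompact_Icc.of_isClosed_subset
      (hcont.preimage_isClosed_of_isClosed isClosed_Icc (hlsc.isClosed_preimage c))
      inter_subset_left
  obtain ⟨r, ⟨hr_mem, hrc⟩, hr_last⟩ := hcompact.exists_isGreatest ⟨s, ⟨le_rfl, hst⟩, hsc.le⟩
  have hr_pos : 0 < r := lt_of_lt_of_le hs hr_mem.1
  have hlevel : ∀ q ∈ Ioc r t, (c : EReal) ≤ E (y q) := fun q hq =>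
    le_of_not_ge fun hqc => (hr_last ⟨⟨hr_mem.1.trans hq.1.le, hq.2⟩, hqc⟩).not_gt hq.1
  have hstay : dist (y t) (y r) ^ 2 / 2 * Real.exp (lam * t) -
      dist (y r) (y r) ^ 2 / 2 * Real.exp (lam * r) ≤
        (c - c) * ∫ q in r..t, Real.exp (lam * q) :=
    hy.half_sq_dist_mul_exp_sub_le hyac hr_pos hr_mem.2 hrc hlevel
  rw [dist_self, sub_self, zero_mul, zero_pow two_ne_zero, zero_div, zero_mul, sub_zero] at hstay
  have hyt : y t = y r := by
    have hsq : dist (y t) (y r) ^ 2 ≤ 0 := by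
      linarith [nonpos_of_mul_nonpos_left hstay (Real.exp_pos _)]
    exact dist_eq_zero.1 ((sq_nonpos_iff _).1 hsq)
  change E (y t) ≤ c
  rw [hyt]
  exact hrc

theorem energy_ne_top (hlsc : LowerSemicontinuous E) (hdom : ∃ x, E x ≠ ⊤) (hy : EVI lam E y)
    (hyac : LocAbsCont y) {t : ℝ} (ht : 0 < t) : E (y t) ≠ ⊤ := by
  obtain ⟨w, hw⟩ := hdom
  have : (ae (volume.restrict (Ioo 0 t))).NeBot := by
    rw [ae_restrict_neBot]
    simp [ht]
  obtain ⟨r, ⟨d', -, hle⟩, hr⟩ :=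
    ((ae_restrict_of_ae_restrict_of_subset (fun _ hr => hr.1 : Ioo 0 t ⊆ Ioi 0) (hy w)).and
      (ae_restrict_mem measurableSet_Ioo)).exists
  have hr_fin : E (y r) ≠ ⊤ := by
    intro htop
    rw [htop, EReal.coe_add_top, EReal.top_add_coe] at hle
    exact hw (top_le_iff.1 hle)
  exact ne_top_of_le_ne_top hr_fin (hy.antitoneOn_energy hlsc hyac hr.1 ht hr.2.le)

theorem antitoneOn_toReal_energy (hbot : ∀ x, E x ≠ ⊥) (hlsc : LowerSemicontinuous E)
    (hdom : ∃ x, E x ≠ ⊤) (hy : EVI lam E y) (hyac : LocAbsCont y) :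
    AntitoneOn (fun t => (E (y t)).toReal) (Ioi 0) := fun _ hs _ ht hst =>
  EReal.toReal_le_toReal (hy.antitoneOn_energy hlsc hyac hs ht hst) (hbot _)
    (hy.energy_ne_top hlsc hdom hyac hs)

theorem half_sq_dist_mul_exp_sub_le_energy_sub (hbot : ∀ x, E x ≠ ⊥)
    (hlsc : LowerSemicontinuous E) (hy : EVI lam E y) (hyac : LocAbsCont y) {w : Y}
    (hw : E w ≠ ⊤) {u v : ℝ} (hu : 0 < u) (huv : u ≤ v) :
    dist (y v) w ^ 2 / 2 * Real.exp (lam * v) - dist (y u) w ^ 2 / 2 * Real.exp (lam * u) ≤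
      ((E w).toReal - (E (y v)).toReal) * ∫ r in u..v, Real.exp (lam * r) :=
  hy.half_sq_dist_mul_exp_sub_le hyac hu huv (EReal.le_coe_toReal hw) fun _ hr =>
    (EReal.coe_toReal_le (hbot _)).trans
      (hy.antitoneOn_energy hlsc hyac (hu.trans hr.1) (hu.trans_le huv) hr.2)

section TwoTrajectories

variable (hbot : ∀ x, E x ≠ ⊥) (hlsc : LowerSemicontinuous E) (hdom : ∃ x, E x ≠ ⊤)
  (hy : EVI lam E y) (hyac : LocAbsCont y) (hz : EVI lam E z) (hzac : LocAbsCont z)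

include hbot hlsc hdom hy hyac hz hzac

theorem sq_exp_mul_dist_sub_le_asymm {u v : ℝ} (hu : 0 < u) (huv : u ≤ v) :
    (Real.exp (lam * v) * dist (y v) (z v)) ^ 2 / 2 -
        (Real.exp (lam * u) * dist (y u) (z u)) ^ 2 / 2 ≤
      (Real.exp (lam * v) * ((E (z v)).toReal - (E (y v)).toReal) +
        Real.exp (lam * u) * ((E (y u)).toReal - (E (z v)).toReal)) *
          ∫ r in u..v, Real.exp (lam * r) := by
  have hy_step := mul_le_mul_of_nonneg_left
    (hy.half_sq_dist_mul_exp_sub_le_energy_sub hbot hlsc hyac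
      (hz.energy_ne_top hlsc hdom hzac (hu.trans_le huv)) hu huv) (Real.exp_pos (lam * v)).le
  have hz_step := mul_le_mul_of_nonneg_left
    (hz.half_sq_dist_mul_exp_sub_le_energy_sub hbot hlsc hzac
      (hy.energy_ne_top hlsc hdom hyac hu) hu huv) (Real.exp_pos (lam * u)).le
  rw [dist_comm (z v), dist_comm (z u)] at hz_step
  linarith

theorem sq_exp_mul_dist_sub_le {u v : ℝ} (hu : 0 < u) (huv : u ≤ v) :
    (Real.exp (lam * v) * dist (y v) (z v)) ^ 2 - (Real.exp (lam * u) * dist (y u) (z u)) ^ 2 ≤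
      (Real.exp (lam * u) * ∫ r in u..v, Real.exp (lam * r)) *
        (((E (y u)).toReal + (E (z u)).toReal) - ((E (y v)).toReal + (E (z v)).toReal)) := by
  have hyz := sq_exp_mul_dist_sub_le_asymm hbot hlsc hdom hy hyac hz hzac hu huv
  have hzy := sq_exp_mul_dist_sub_le_asymm hbot hlsc hdom hz hzac hy hyac hu huv
  rw [dist_comm (z v), dist_comm (z u)] at hzy
  linarith

theorem exp_mul_dist_le {s t : ℝ} (hs : 0 < s) (hst : s ≤ t) :
    Real.exp (lam * t) * dist (y t) (z t) ≤ Real.exp (lam * s) * dist (y s) (z s) := by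
  let P : ℝ → ℝ := fun r => (E (y r)).toReal + (E (z r)).toReal
  have hP : AntitoneOn P (Ioi 0) :=
    (hy.antitoneOn_toReal_energy hbot hlsc hdom hyac).add
      (hz.antitoneOn_toReal_energy hbot hlsc hdom hzac)
  let M := Real.exp (|lam| * t)
  have hexp_le : ∀ r, 0 < r → r ≤ t → Real.exp (lam * r) ≤ M := fun r hr hrt => by
    dsimp only [M]
    gcongr
    exact le_abs_self lam
  refine le_of_sq_le_sq (le_of_forall_sub_le_mul_sub
    (f := fun r => (Real.exp (lam * r) * dist (y r) (z r)) ^ 2) (Q := fun r => M ^ 2 * P r)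
    hst fun u v hsu huv hvt => ?_) (by positivity)
  have hu : 0 < u := hs.trans_le hsu
  have hintegral : ∫ r in u..v, Real.exp (lam * r) ≤ (v - u) * M := by
    rw [← smul_eq_mul, ← intervalIntegral.integral_const]
    exact intervalIntegral.integral_mono_on huv
      (by apply Continuous.intervalIntegrable; fun_prop) intervalIntegrable_const
      fun r hr => hexp_le r (hu.trans_le hr.1) (hr.2.trans hvt)
  have hP_sub : 0 ≤ P u - P v := sub_nonneg.2 (hP hu (hu.trans_le huv) huv)
  have hintegral_nonneg : 0 ≤ ∫ r in u..v, Real.exp (lam * r) :=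
    intervalIntegral.integral_nonneg huv fun r _ => (Real.exp_pos _).le
  calc _ ≤ (Real.exp (lam * u) * ∫ r in u..v, Real.exp (lam * r)) * (P u - P v) :=
        sq_exp_mul_dist_sub_le hbot hlsc hdom hy hyac hz hzac hu huv
    _ ≤ (M * ((v - u) * M)) * (P u - P v) := by
        gcongr
        exact hexp_le u hu (huv.trans hvt)
    _ = (v - u) * (M ^ 2 * P u - M ^ 2 * P v) := by ring

theorem dist_le_exp_mul_dist {s t : ℝ} (hs : 0 < s) (hst : s ≤ t) :
    dist (y t) (z t) ≤ Real.exp (-lam * (t - s)) * dist (y s) (z s) := by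
  have h := exp_mul_dist_le hbot hlsc hdom hy hyac hz hzac hs hst
  calc dist (y t) (z t) = Real.exp (-(lam * t)) * (Real.exp (lam * t) * dist (y t) (z t)) := by
        rw [← mul_assoc, ← Real.exp_add, neg_add_cancel, Real.exp_zero, one_mul]
    _ ≤ Real.exp (-(lam * t)) * (Real.exp (lam * s) * dist (y s) (z s)) := by gcongr
    _ = Real.exp (-lam * (t - s)) * dist (y s) (z s) := by
        rw [← mul_assoc, ← Real.exp_add]
        ring_nf

end TwoTrajectories

end EVI

theorem eq_of_forall_dist_le_exp_mul_dist {Y : Type*} [MetricSpace Y] {lam : ℝ} {a : Y}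
    {y z : ℝ → Y} (hy : Tendsto y (𝓝[>] 0) (𝓝 a)) (hz : Tendsto z (𝓝[>] 0) (𝓝 a))
    (h : ∀ s t : ℝ, 0 < s → s ≤ t →
      dist (y t) (z t) ≤ Real.exp (-lam * (t - s)) * dist (y s) (z s)) {t : ℝ} (ht : 0 < t) :
    y t = z t := by
  have hexp : Tendsto (fun s => Real.exp (-lam * (t - s))) (𝓝[>] 0)
      (𝓝 (Real.exp (-lam * (t - 0)))) :=
    (Continuous.tendsto (by fun_prop) 0).mono_left nhdsWithin_le_nhds
  have hlim := hexp.mul (hy.dist hz)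
  rw [dist_self, mul_zero] at hlim
  refine dist_le_zero.1 (ge_of_tendsto hlim ?_)
  filter_upwards [Ioc_mem_nhdsGT ht] with s hs
  exact h s t hs.1 hs.2

theorem gradientFlow_contraction_and_unique_general {Y : Type*} [MetricSpace Y]
    (lam : ℝ) (E : Y → EReal) (hbot : ∀ y, E y ≠ ⊥)
    (hlsc : LowerSemicontinuous E) (hdom : ∃ y, E y ≠ ⊤)
    (a b : Y) (ytraj ztraj : ℝ → Y)
    (hy : GradientFlow lam E a ytraj) (hz : GradientFlow lam E b ztraj) :
    (∀ s t : ℝ, 0 < s → s ≤ t →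
        dist (ytraj t) (ztraj t) ≤ Real.exp (-lam * (t - s)) * dist (ytraj s) (ztraj s)) ∧
      (a = b → ∀ t : ℝ, 0 < t → ytraj t = ztraj t) := by
  obtain ⟨hyac, hy_lim, hy_evi⟩ := hy
  obtain ⟨hzac, hz_lim, hz_evi⟩ := hz
  have hcontr : ∀ s t : ℝ, 0 < s → s ≤ t →
      dist (ytraj t) (ztraj t) ≤ Real.exp (-lam * (t - s)) * dist (ytraj s) (ztraj s) :=
    fun _ _ => EVI.dist_le_exp_mul_dist hbot hlsc hdom hy_evi hyac hz_evi hzac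
  refine ⟨hcontr, ?_⟩
  rintro rfl t ht
  exact eq_of_forall_dist_le_exp_mul_dist hy_lim hz_lim hcontr ht

/-- **`λ`-contraction and uniqueness of gradient flow trajectories** on a CAT(0) space:
`d(y_t, z_t) ≤ e^{−λ(t−s)} d(y_s, z_s)` for `t ≥ s > 0`, and two trajectories with the
same starting point coincide. -/
theorem gradientFlow_contraction_and_unique {Y : Type*} [MetricSpace Y] [CompleteSpace Y]
    (hY : Cat0 Y) (lam : ℝ) (E : Y → EReal) (hbot : ∀ y, E y ≠ ⊥)
    (hconv : LamConvex lam E) (hlsc : LowerSemicontinuous E) (hdom : ∃ y, E y ≠ ⊤)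
    (a b : Y) (ytraj ztraj : ℝ → Y)
    (hy : GradientFlow lam E a ytraj) (hz : GradientFlow lam E b ztraj) :
    (∀ s t : ℝ, 0 < s → s ≤ t →
        dist (ytraj t) (ztraj t) ≤ Real.exp (-lam * (t - s)) * dist (ytraj s) (ztraj s)) ∧
      (a = b → ∀ t : ℝ, 0 < t → ytraj t = ztraj t) :=
  gradientFlow_contraction_and_unique_general lam E hbot hlsc hdom a b ytraj ztraj hy hz
end

section
/- Let Y be a CAT(0) space and E : Y → [0, +∞] a λ-convex and lower semicontinuous functional with D(E) nonempty, λ ∈ ℝ. Let y, z ∈ Y and let (y_t), (z_t) be the gradient flow trajectories for E starting from y and z. Then for any t ≥ s > 0 it holds d²(y_t, z_s) ≤ e^{−2λs}·( d²(y, z) + 2(t−s)·(E(z) − E(y)) + 2·|∂⁻E|²(y)·∫_0^{t−s} θ_λ(r) dr − λ·∫_0^{t−s} d²(y_r, z) dr ), where θ_λ(t) := ∫_0^t e^{−2λr} dr. -/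
open Filter MeasureTheory Set Bornology
open scoped ENNReal Topology NNReal

/-!
The Evolution Variational Inequality (EVI) bounds the energy along a trajectory from above by an
integrable function, so almost every time is a Lebesgue point of the energies `E (y t)` and
`E (z t)`. At such times, testing the EVI of each trajectory against the position of the other
cancels the energies and shows that `t ↦ d²(y_t, z_t)` has derivative at most `-2λ d²(y_t, z_t)`.
Hence the flow contracts distances by `e^{-λt}`; applied to `r ↦ y_{r + t - s}` and `z`, this
reduces the claim to an estimate of `d²(y_T, b)` with `T = t - s`.

By the EVI tested against `b`, it remains to control `E(a) - E(y_r)`. For a `λ`-convex energy the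
local slope at `a` bounds the global energy drop: `E(a) - E(x) ≤ |∂⁻E|(a) d(x, a) - (λ/2) d²(x, a)`.
Combined with the EVI tested against `a`, this gives `d(y_r, a) ≤ |∂⁻E|(a) ∫₀^r e^{-λq} dq`, and
inserting the latter into the former gives `E(a) - E(y_r) ≤ |∂⁻E|²(a) θ_λ(r)`.
-/

/-- Absolute continuity of a curve on every compact interval contained in `s`. Unlike
`LocAbsCont`, it rests on Mathlib's `AbsolutelyContinuousOnInterval`, which gives access to the
fundamental theorem of calculus. -/
def LocallyAbsolutelyContinuousOn {X : Type*} [PseudoMetricSpace X] (f : ℝ → X) (s : Set ℝ) :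
    Prop :=
  ∀ ⦃p q : ℝ⦄, uIcc p q ⊆ s → AbsolutelyContinuousOnInterval f p q

theorem ae_of_forall_Icc_ae {s : Set ℝ} (hs : IsOpen s) {P : ℝ → Prop}
    (h : ∀ p q, Icc p q ⊆ s → ∀ᵐ x, x ∈ Icc p q → P x) : ∀ᵐ x, x ∈ s → P x := by
  have hnull : volume {x | x ∈ s ∧ ¬P x} = 0 := by
    refine measure_null_of_locally_null _ fun x hx => ?_
    obtain ⟨p, q, -, hxpq, hpq⟩ := exists_Icc_mem_subset_of_mem_nhds (hs.mem_nhds hx.1)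
    refine ⟨{r | ¬(r ∈ Icc p q → P r)}, ?_, h p q hpq⟩
    filter_upwards [mem_nhdsWithin_of_mem_nhds hxpq, self_mem_nhdsWithin] with r hr hrP hmem
    exact hrP.2 (hmem hr)
  simpa only [ae_iff, Classical.not_imp] using hnull

namespace LocallyAbsolutelyContinuousOn

variable {X : Type*} [PseudoMetricSpace X] {s : Set ℝ}

theorem ae_differentiableAt {f : ℝ → ℝ} (hf : LocallyAbsolutelyContinuousOn f s)
    (hs : IsOpen s) : ∀ᵐ x, x ∈ s → DifferentiableAt ℝ f x := by
  refine ae_of_forall_Icc_ae hs fun p q hpq => ?_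
  rcases le_or_gt p q with hle | hlt
  · rw [← uIcc_of_le hle] at hpq ⊢
    exact (hf hpq).ae_differentiableAt
  · simp [Icc_eq_empty_of_lt hlt]

theorem fun_dist {f g : ℝ → X} (hf : LocallyAbsolutelyContinuousOn f s)
    (hg : LocallyAbsolutelyContinuousOn g s) :
    LocallyAbsolutelyContinuousOn (fun x => dist (f x) (g x)) s := fun _ _ hpq =>
  squeeze_zero (fun _ => Finset.sum_nonneg fun _ _ => dist_nonneg)
    (fun _ => (Finset.sum_le_sum fun _ _ => dist_dist_dist_le _ _ _ _).trans_eq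
      Finset.sum_add_distrib)
    (by simpa only [add_zero] using Tendsto.add (hf hpq) (hg hpq))

theorem const (x : X) : LocallyAbsolutelyContinuousOn (fun _ => x) s := fun _ _ _ =>
  (LipschitzWith.const x).lipschitzOnWith.absolutelyContinuousOnInterval

theorem continuousOn {f : ℝ → X} (hf : LocallyAbsolutelyContinuousOn f s) (hs : IsOpen s) :
    ContinuousOn f s := by
  intro x hx
  obtain ⟨p, q, hxpq, hmem, hsub⟩ := exists_Icc_mem_subset_of_mem_nhds (hs.mem_nhds hx)
  rw [← uIcc_of_le (hxpq.1.trans hxpq.2)] at hmem hsub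
  have hcont := ((hf.fun_dist (const (f x))) hsub).continuousOn.continuousAt hmem
  refine ContinuousAt.continuousWithinAt (tendsto_iff_dist_tendsto_zero.2 ?_)
  simpa only [dist_self] using hcont.tendsto

theorem fun_sq {f : ℝ → ℝ} (hf : LocallyAbsolutelyContinuousOn f s) :
    LocallyAbsolutelyContinuousOn (fun x => f x ^ 2) s := fun _ _ hpq => by
  simpa only [pow_two] using (hf hpq).fun_mul (hf hpq)

end LocallyAbsolutelyContinuousOn

theorem sub_le_integral_of_absolutelyContinuousOnInterval {f k : ℝ → ℝ} {p q : ℝ} (hpq : p ≤ q)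
    (hf : AbsolutelyContinuousOnInterval f p q) (hk : IntervalIntegrable k volume p q)
    (hderiv : ∀ᵐ x, x ∈ Icc p q → deriv f x ≤ k x) : f q - f p ≤ ∫ x in p..q, k x := by
  rw [← hf.integral_deriv_eq_sub]
  exact intervalIntegral.integral_mono_ae_restrict hpq hf.intervalIntegrable_deriv hk
    ((ae_restrict_iff' measurableSet_Icc).2 hderiv)

section RightLimit

variable {f : ℝ → ℝ} {a b L : ℝ}

theorem sub_le_integral_of_tendsto_of_ae_deriv_le {k : ℝ → ℝ} (hab : a < b)
    (hf : LocallyAbsolutelyContinuousOn f (Ioi a)) (hlim : Tendsto f (𝓝[>] a) (𝓝 L))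
    (hk : IntervalIntegrable k volume a b) (hderiv : ∀ᵐ x, x ∈ Ioc a b → deriv f x ≤ k x) :
    f b - L ≤ ∫ x in a..b, k x := by
  have hprim : Tendsto (fun p => ∫ x in p..b, k x) (𝓝[>] a) (𝓝 (∫ x in a..b, k x)) := by
    have hcont := intervalIntegral.continuousOn_primitive_interval_left
      ((intervalIntegrable_iff' (by simp)).1 hk)
    rw [uIcc_of_le hab.le] at hcont
    exact (hcont a (left_mem_Icc.2 hab.le)).mono_left (nhdsWithin_le_of_mem (Icc_mem_nhdsGT hab))
  refine le_of_tendsto_of_tendsto (hlim.const_sub (f b)) hprim ?_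
  filter_upwards [Ioo_mem_nhdsGT hab] with p hp
  refine sub_le_integral_of_absolutelyContinuousOnInterval hp.2.le
    (hf (ordConnected_Ioi.uIcc_subset hp.1 hab)) (hk.mono_set ?_) ?_
  · rw [uIcc_of_le hp.2.le, uIcc_of_le hab.le]
    exact Icc_subset_Icc_left hp.1.le
  · filter_upwards [hderiv] with x hx hxp
    exact hx ⟨hp.1.trans_le hxp.1, hxp.2⟩

/-- Duhamel's formula: `exp (K * (b - x)) * f x` has derivative at most
`ε * exp (K * (b - x))`. -/
theorem le_exp_mul_add_of_ae_deriv_le {K ε : ℝ} (hab : a < b)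
    (hf : LocallyAbsolutelyContinuousOn f (Ioi a)) (hlim : Tendsto f (𝓝[>] a) (𝓝 L))
    (hderiv : ∀ᵐ x, x ∈ Ioc a b → deriv f x ≤ K * f x + ε) :
    f b ≤ Real.exp (K * (b - a)) * L + ε * ∫ x in a..b, Real.exp (K * (b - x)) := by
  set w : ℝ → ℝ := fun x => Real.exp (K * (b - x)) with hw
  have hwc : ContDiff ℝ 1 w := by fun_prop
  have hw' (x : ℝ) : HasDerivAt w (-K * w x) x := by
    convert! (((hasDerivAt_id x).const_sub b).const_mul K).exp using 1
    simp only [hw, id]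
    ring
  have hweighted : LocallyAbsolutelyContinuousOn (fun x => w x * f x) (Ioi a) := fun _ _ hpq =>
    hwc.contDiffOn.absolutelyContinuousOnInterval.fun_mul (hf hpq)
  have hbound := sub_le_integral_of_tendsto_of_ae_deriv_le (k := fun x => ε * w x) hab hweighted
    (((hwc.continuous.tendsto a).mono_left nhdsWithin_le_nhds).mul hlim)
    ((hwc.continuous.const_mul ε).intervalIntegrable _ _) ?_
  · have hwb : w b = 1 := by simp [hw]
    rw [hwb, one_mul, intervalIntegral.integral_const_mul] at hbound
    linarith
  · filter_upwards [hderiv, hf.ae_differentiableAt isOpen_Ioi] with x hx hdiff hxab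
    rw [((hw' x).fun_mul (hdiff hxab.1).hasDerivAt).deriv]
    have := mul_le_mul_of_nonneg_left (hx hxab) (Real.exp_pos (K * (b - x))).le
    change w x * _ ≤ w x * _ at this
    linarith

theorem intervalIntegrable_of_continuousOn_Ioc_of_tendsto (hab : a ≤ b)
    (hf : ContinuousOn f (Ioc a b)) (hlim : Tendsto f (𝓝[>] a) (𝓝 L)) :
    IntervalIntegrable f volume a b := by
  have hupdate : ContinuousOn (Function.update f a L) (uIcc a b) := by
    rw [uIcc_of_le hab, continuousOn_update_iff, Icc_sdiff_left]
    exact ⟨hf, fun _ => hlim.mono_left (nhdsWithin_mono a Ioc_subset_Ioi_self)⟩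
  refine hupdate.intervalIntegrable.congr fun x hx => ?_
  rw [uIoc_of_le hab] at hx
  exact Function.update_of_ne hx.1.ne' _ _

end RightLimit

theorem deriv_le_of_deriv_sq_le {f : ℝ → ℝ} {t κ : ℝ} (hf : DifferentiableAt ℝ f t)
    (hnonneg : ∀ s, 0 ≤ f s) (hsq : deriv (fun s => f s ^ 2) t ≤ 2 * f t * κ)
    (hzero : f t = 0 → 0 ≤ κ) : deriv f t ≤ κ := by
  rcases (hnonneg t).eq_or_lt' with h0 | hpos
  · have hmin : IsLocalMin f t := Eventually.of_forall fun s => h0.trans_le (hnonneg s)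
    exact hmin.deriv_eq_zero.trans_le (hzero h0)
  · rw [(hf.hasDerivAt.fun_pow 2).deriv] at hsq
    refine le_of_mul_le_mul_left ?_ (mul_pos two_pos hpos)
    simpa using hsq

section LebesguePoint

theorem integral_const_sub_sub_le {f φ : ℝ → ℝ} {k m p q : ℝ} (hpq : p ≤ q)
    (hf : IntervalIntegrable f volume p q) (hφ : ContinuousOn φ (Icc p q))
    (hm : ∀ r ∈ Icc p q, m ≤ φ r) :
    ∫ r in p..q, (k - f r - φ r) ≤ (q - p) * (k - m) - ∫ r in p..q, f r := by
  have hkf : IntervalIntegrable (fun r => k - f r) volume p q := intervalIntegrable_const.sub hf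
  calc ∫ r in p..q, (k - f r - φ r)
      ≤ ∫ r in p..q, (k - f r - m) :=
        intervalIntegral.integral_mono_on hpq (hkf.sub (hφ.intervalIntegrable_of_Icc hpq))
          (hkf.sub intervalIntegrable_const) fun r hr => sub_le_sub_left (hm r hr) _
    _ = (q - p) * (k - m) - ∫ r in p..q, f r := by
        rw [intervalIntegral.integral_sub hkf intervalIntegrable_const,
          intervalIntegral.integral_sub intervalIntegrable_const hf,
          intervalIntegral.integral_const, intervalIntegral.integral_const, smul_eq_mul,
          smul_eq_mul]
        ring

variable {f g : ℝ → ℝ} {c t q : ℝ} (htq : t < q)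
include htq

theorem frequently_le_add_of_hasDerivAt_integral {P : ℝ → Prop} {ε : ℝ} (hε : 0 < ε)
    (hg : IntervalIntegrable g volume t q)
    (hg' : HasDerivAt (fun τ => ∫ r in t..τ, g r) (g t) t) (hP : ∀ᵐ τ, τ ∈ Ioc t q → P τ) :
    ∃ᶠ τ in 𝓝[>] t, g τ ≤ g t + ε ∧ P τ := by
  intro hnot
  obtain ⟨u, htu, hu⟩ := (mem_nhdsGT_iff_exists_Ioc_subset).1 hnot
  refine (lt_add_of_pos_right (g t) hε).not_ge (ge_of_tendsto
    (hg'.tendsto_slope.mono_left (nhdsGT_le_nhdsNE t)) ?_)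
  filter_upwards [Ioc_mem_nhdsGT (lt_min htu htq)] with τ hτ
  have hτq : Ioc t τ ⊆ Ioc t q := Ioc_subset_Ioc_right (hτ.2.trans (min_le_right _ _))
  have hlarge : ∀ᵐ r ∂volume.restrict (Icc t τ), g t + ε ≤ g r := by
    rw [← Measure.restrict_congr_set Ioc_ae_eq_Icc, ae_restrict_iff' measurableSet_Ioc]
    filter_upwards [hP] with r hPr hr
    by_contra! hlt
    exact hu ⟨hr.1, hr.2.trans (hτ.2.trans (min_le_left _ _))⟩ ⟨hlt.le, hPr (hτq hr)⟩
  have hint : (τ - t) * (g t + ε) ≤ ∫ r in t..τ, g r := by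
    rw [← smul_eq_mul, ← intervalIntegral.integral_const]
    refine intervalIntegral.integral_mono_ae_restrict hτ.1.le intervalIntegrable_const
      (hg.mono_set' ?_) hlarge
    rwa [uIoc_of_le hτ.1.le, uIoc_of_le htq.le]
  rw [slope_def_field, intervalIntegral.integral_same, sub_zero, le_div_iff₀ (sub_pos.2 hτ.1)]
  linarith

theorem diag_sub_le {D : ℝ → ℝ → ℝ} {B m : ℝ}
    (hD : ContinuousOn (Function.uncurry D) (Icc t q ×ˢ Icc t q))
    (hf : IntervalIntegrable f volume t q) (hg : IntervalIntegrable g volume t q)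
    (hm : ∀ r ∈ Icc t q, ∀ s ∈ Icc t q, m ≤ c * D r s) (hB : g q ≤ B)
    (hfst : D q q - D t q ≤ ∫ r in t..q, (g q - f r - c * D r q))
    (hsnd : D t q - D t t ≤ ∫ r in t..q, (f t - g r - c * D t r)) :
    D q q + (∫ r in t..q, f r) + (∫ r in t..q, g r) - D t t ≤ (q - t) * (B - m + (f t - m)) := by
  have ht : t ∈ Icc t q := left_mem_Icc.2 htq.le
  have hq : q ∈ Icc t q := right_mem_Icc.2 htq.le
  have hcD := hD.const_mul c
  have hfst' := hfst.trans <| integral_const_sub_sub_le htq.le hf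
    (hcD.comp (f := fun r => (r, q)) (by fun_prop) fun r hr => ⟨hr, hq⟩) fun r hr => hm r hr q hq
  have hsnd' := hsnd.trans <| integral_const_sub_sub_le htq.le hg
    (hcD.comp (f := fun r => (t, r)) (by fun_prop) fun r hr => ⟨ht, hr⟩) fun r hr => hm t ht r hr
  have hgB := mul_le_mul_of_nonneg_left hB (sub_nonneg.2 htq.le)
  linarith

/-- The estimate in the first variable involves the value `g τ`, of which only averages over
`[t, τ]` are controlled; so difference quotients are taken along good times `τ ↓ t` only. -/
theorem deriv_diag_le {D : ℝ → ℝ → ℝ}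
    (hD : ContinuousOn (Function.uncurry D) (Icc t q ×ˢ Icc t q))
    (hdiag : DifferentiableAt ℝ (fun r => D r r) t)
    (hf : IntervalIntegrable f volume t q) (hg : IntervalIntegrable g volume t q)
    (hf' : HasDerivAt (fun τ => ∫ r in t..τ, f r) (f t) t)
    (hg' : HasDerivAt (fun τ => ∫ r in t..τ, g r) (g t) t)
    (hfst : ∀ᵐ τ, τ ∈ Ioc t q → D τ τ - D t τ ≤ ∫ r in t..τ, (g τ - f r - c * D r τ))
    (hsnd : ∀ τ ∈ Ioc t q, D t τ - D t t ≤ ∫ r in t..τ, (f t - g r - c * D t r)) :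
    deriv (fun r => D r r) t ≤ -2 * c * D t t := by
  refine le_of_forall_pos_le_add fun ε hε => ?_
  set m := c * D t t - ε / 3 with hm
  obtain ⟨u, hu, hmu⟩ : ∃ u ∈ Ioc t q, ∀ r ∈ Ico t u, ∀ s ∈ Ico t u, m < c * D r s := by
    have htm : t ∈ Icc t q := left_mem_Icc.2 htq.le
    have hev := ((hD.const_mul c) (t, t) ⟨htm, htm⟩).eventually_const_lt
      (sub_lt_self _ (by positivity : 0 < ε / 3))
    rw [nhdsWithin_prod_eq, nhdsWithin_Icc_eq_nhdsGE htq] at hev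
    obtain ⟨V, hV, hmV⟩ := mem_prod_same_iff.1 hev
    obtain ⟨u, hu, huV⟩ := (mem_nhdsGE_iff_exists_mem_Ioc_Ico_subset htq).1 hV
    exact ⟨u, hu, fun r hr s hs => hmV (mk_mem_prod (huV hr) (huV hs))⟩
  have hslope : ∃ᶠ τ in 𝓝[>] t,
      slope (fun τ => D τ τ + (∫ r in t..τ, f r) + ∫ r in t..τ, g r) t τ
        ≤ g t + ε / 3 - m + (f t - m) := by
    refine ((frequently_le_add_of_hasDerivAt_integral htq (by positivity : 0 < ε / 3) hg hg'
      hfst).and_eventually (Ioo_mem_nhdsGT hu.1)).mono ?_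
    rintro τ ⟨⟨hgτ, hfstτ⟩, hτ⟩
    have hτq : τ ∈ Ioc t q := ⟨hτ.1, hτ.2.le.trans hu.2⟩
    have hIcc : Icc t τ ⊆ Icc t q := Icc_subset_Icc_right hτq.2
    have hIco : Icc t τ ⊆ Ico t u := Icc_subset_Ico_right hτ.2
    have huIcc : uIcc t τ ⊆ uIcc t q := by rwa [uIcc_of_le hτ.1.le, uIcc_of_le htq.le]
    have hle := diag_sub_le hτ.1 (hD.mono (prod_mono hIcc hIcc)) (hf.mono_set huIcc)
      (hg.mono_set huIcc) (fun r hr s hs => (hmu r (hIco hr) s (hIco hs)).le) hgτ hfstτ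
      (hsnd τ hτq)
    rw [slope_def_field, div_le_iff₀' (sub_pos.2 hτ.1)]
    simpa only [intervalIntegral.integral_same, add_zero] using hle
  have hderiv := (hdiag.hasDerivAt.fun_add hf').fun_add hg'
  have hlim := le_of_tendsto_of_frequently
    (hderiv.tendsto_slope.mono_left (nhdsGT_le_nhdsNE t)) hslope
  linarith

end LebesguePoint

section ExponentialIntegrals

theorem mul_integral_exp_mul (c t : ℝ) :
    c * ∫ r in (0 : ℝ)..t, Real.exp (c * r) = Real.exp (c * t) - 1 := by
  rw [intervalIntegral.mul_integral_comp_mul_left]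
  simp

theorem integral_exp_sub_mul_sq (lam t : ℝ) :
    (∫ r in (0 : ℝ)..t, Real.exp (-lam * r))
        - lam / 2 * (∫ r in (0 : ℝ)..t, Real.exp (-lam * r)) ^ 2
      = ∫ r in (0 : ℝ)..t, Real.exp (-2 * lam * r) := by
  rcases eq_or_ne lam 0 with rfl | hlam
  · simp
  · have h₁ := mul_integral_exp_mul (-lam) t
    have h₂ := mul_integral_exp_mul (-2 * lam) t
    have hsq : Real.exp (-2 * lam * t) = Real.exp (-lam * t) ^ 2 := by
      rw [← Real.exp_nat_mul]
      congr 1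
      push_cast
      ring
    set β := ∫ r in (0 : ℝ)..t, Real.exp (-lam * r)
    have hexp : Real.exp (-lam * t) = 1 - lam * β := by linarith
    refine mul_left_cancel₀ (mul_ne_zero two_ne_zero hlam) ?_
    rw [hsq, hexp] at h₂
    linear_combination h₂

theorem mul_sub_mul_sq_le_of_le_mul_integral_exp {lam S t x : ℝ} (hS : 0 ≤ S) (hx : 0 ≤ x)
    (hxS : x ≤ S * ∫ r in (0 : ℝ)..t, Real.exp (-lam * r)) :
    S * x - lam / 2 * x ^ 2 ≤ S ^ 2 * ∫ r in (0 : ℝ)..t, Real.exp (-2 * lam * r) := by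
  rw [← integral_exp_sub_mul_sq]
  have h₁ := mul_integral_exp_mul (-lam) t
  have hexp := Real.exp_pos (-lam * t)
  set β := ∫ r in (0 : ℝ)..t, Real.exp (-lam * r)
  have hfactor : lam / 2 * (S * β + x) ≤ S := by
    rcases le_total lam 0 with hlam | hlam
    · exact (mul_nonpos_of_nonpos_of_nonneg (by linarith) (by linarith)).trans hS
    · have h₂ : lam * x ≤ lam * (S * β) := mul_le_mul_of_nonneg_left hxS hlam
      have h₃ : 0 ≤ S * (1 - lam * β) := mul_nonneg hS (by linarith)
      linarith
  linear_combination mul_nonneg (sub_nonneg.2 hxS) (sub_nonneg.2 hfactor)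

theorem integral_integral_exp_pos (c : ℝ) {T : ℝ} (hT : 0 < T) :
    0 < ∫ r in (0 : ℝ)..T, ∫ q in (0 : ℝ)..r, Real.exp (c * q) := by
  have hexp : Continuous fun q => Real.exp (c * q) := by fun_prop
  refine intervalIntegral.intervalIntegral_pos_of_pos_on ?_ (fun r hr => ?_) hT
  · exact (intervalIntegral.continuous_primitive
      (fun _ _ => hexp.intervalIntegrable _ _) 0).intervalIntegrable _ _
  · exact intervalIntegral.intervalIntegral_pos_of_pos (hexp.intervalIntegrable _ _)
      (fun _ => Real.exp_pos _) hr.1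

end ExponentialIntegrals

section Slope

variable {Y : Type*} [MetricSpace Y] {lam : ℝ} {E : Y → EReal}

theorem IsGeodesic.dist_left {γ : ℝ → Y} (hγ : IsGeodesic γ) {τ : ℝ} (hτ : τ ∈ Icc (0 : ℝ) 1) :
    dist (γ 0) (γ τ) = τ * dist (γ 0) (γ 1) := by
  rw [hγ 0 (left_mem_Icc.2 zero_le_one) τ hτ, zero_sub, abs_neg, abs_of_nonneg hτ.1]

theorem IsGeodesic.tendsto_nhdsNE {γ : ℝ → Y} (hγ : IsGeodesic γ) (hne : γ 0 ≠ γ 1) :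
    Tendsto γ (𝓝[>] 0) (𝓝[≠] (γ 0)) := by
  have hev : ∀ᶠ τ in 𝓝[>] (0 : ℝ), τ ∈ Ioo (0 : ℝ) 1 := Ioo_mem_nhdsGT zero_lt_one
  refine tendsto_nhdsWithin_iff.2 ⟨tendsto_iff_dist_tendsto_zero.2 ?_, ?_⟩
  · have hlin : Tendsto (fun τ => τ * dist (γ 0) (γ 1)) (𝓝[>] 0) (𝓝 0) := by
      simpa using ((continuous_mul_const (dist (γ 0) (γ 1))).tendsto 0).mono_left
        (nhdsWithin_le_nhds (s := Ioi 0))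
    refine hlin.congr' ?_
    filter_upwards [hev] with τ hτ
    rw [dist_comm (γ τ), hγ.dist_left (Ioo_subset_Icc_self hτ)]
  · filter_upwards [hev] with τ hτ
    have hpos : 0 < dist (γ 0) (γ τ) := by
      rw [hγ.dist_left (Ioo_subset_Icc_self hτ)]
      exact mul_pos hτ.1 (dist_pos.2 hne)
    exact (dist_pos.1 hpos).symm

theorem LamConvex.le_quotient_of_isGeodesic (hconv : LamConvex lam E) (hbot : ∀ x, E x ≠ ⊥)
    {γ : ℝ → Y} (hγ : IsGeodesic γ) (hne : γ 0 ≠ γ 1) (h₀ : E (γ 0) ≠ ⊤) (h₁ : E (γ 1) ≠ ⊤)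
    {τ : ℝ} (hτ : τ ∈ Ioc (0 : ℝ) 1) :
    ((E (γ 0)).toReal - (E (γ 1)).toReal) / dist (γ 0) (γ 1)
        + lam / 2 * (1 - τ) * dist (γ 0) (γ 1)
      ≤ (E (γ 0) - E (γ τ)).toReal / dist (γ 0) (γ τ) := by
  have hτ' := Ioc_subset_Icc_self hτ
  have hle := hconv γ hγ τ hτ'
  rw [← EReal.coe_toReal h₀ (hbot _), ← EReal.coe_toReal h₁ (hbot _)] at hle
  norm_cast at hle
  have htop : E (γ τ) ≠ ⊤ := ne_top_of_le_ne_top (EReal.coe_ne_top _) hle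
  rw [← EReal.coe_toReal htop (hbot _), EReal.coe_le_coe_iff] at hle
  have hd : 0 < dist (γ 0) (γ 1) := dist_pos.2 hne
  rw [EReal.toReal_sub h₀ (hbot _) htop (hbot _), hγ.dist_left hτ',
    le_div_iff₀ (mul_pos hτ.1 hd), add_mul, div_mul_eq_mul_div, mul_left_comm,
    mul_div_assoc, mul_div_assoc, div_self hd.ne']
  linarith

theorem LamConvex.ofReal_le_descendingSlope (hY : GeodesicSpace Y) (hconv : LamConvex lam E)
    (hbot : ∀ x, E x ≠ ⊥) {a x : Y} (hax : a ≠ x) (ha : E a ≠ ⊤) (hx : E x ≠ ⊤) :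
    ENNReal.ofReal (((E a).toReal - (E x).toReal) / dist a x + lam / 2 * dist a x)
      ≤ descendingSlope E a := by
  obtain ⟨γ, hγ, rfl, rfl⟩ := hY a x
  set q : ℝ → ℝ := fun τ => ((E (γ 0)).toReal - (E (γ 1)).toReal) / dist (γ 0) (γ 1)
    + lam / 2 * (1 - τ) * dist (γ 0) (γ 1) with hq
  set Q : Y → ℝ≥0∞ := fun x => ENNReal.ofReal ((E (γ 0) - E x).toReal / dist (γ 0) x)
  have hq₀ : Tendsto (fun τ => ENNReal.ofReal (q τ)) (𝓝[>] 0) (𝓝 (ENNReal.ofReal (q 0))) :=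
    ((ENNReal.continuous_ofReal.comp (by fun_prop : Continuous q)).tendsto 0).mono_left
      nhdsWithin_le_nhds
  rw [descendingSlope, if_neg ha]
  calc _ = ENNReal.ofReal (q 0) := by simp only [hq, sub_zero, mul_one]
    _ = limsup (fun τ => ENNReal.ofReal (q τ)) (𝓝[>] 0) := hq₀.limsup_eq.symm
    _ ≤ limsup (Q ∘ γ) (𝓝[>] 0) := by
        refine limsup_le_limsup ?_
        filter_upwards [Ioc_mem_nhdsGT zero_lt_one] with τ hτ
        exact ENNReal.ofReal_le_ofReal (hconv.le_quotient_of_isGeodesic hbot hγ hax ha hx hτ)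
    _ = limsup Q (map γ (𝓝[>] 0)) := limsup_comp ..
    _ ≤ limsup Q (𝓝[≠] (γ 0)) := limsup_le_limsup_of_le (hγ.tendsto_nhdsNE hax)

/-- `S` bounds the drop of the energy from `a` to every other point. For a `lam`-convex energy the
descending slope at `a` has this property, which is the only way the slope enters the estimate. -/
structure IsGlobalSlopeBound (lam : ℝ) (E : Y → EReal) (a : Y) (S : ℝ) : Prop where
  nonneg : 0 ≤ S
  toReal_sub_toReal_le : ∀ x, E x ≠ ⊤ →
    (E a).toReal - (E x).toReal ≤ S * dist x a - lam / 2 * dist x a ^ 2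

theorem LamConvex.isGlobalSlopeBound (hY : GeodesicSpace Y) (hconv : LamConvex lam E)
    (hbot : ∀ x, E x ≠ ⊥) {a : Y} (ha : E a ≠ ⊤) (hS : descendingSlope E a ≠ ⊤) :
    IsGlobalSlopeBound lam E a (descendingSlope E a).toReal where
  nonneg := ENNReal.toReal_nonneg
  toReal_sub_toReal_le x hx := by
    rcases eq_or_ne a x with rfl | hax
    · simp
    have hd : 0 < dist a x := dist_pos.2 hax
    have hquot := (ENNReal.ofReal_le_iff_le_toReal hS).1
      (hconv.ofReal_le_descendingSlope hY hbot hax ha hx)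
    have hmul := mul_le_mul_of_nonneg_right hquot hd.le
    rw [add_mul, div_mul_cancel₀ _ hd.ne'] at hmul
    rw [dist_comm x a]
    linarith

end Slope

theorem exists_forall_le_toReal_of_isCompact {X : Type*} [TopologicalSpace X]
    {F : X → EReal} {K : Set X} (hF : LowerSemicontinuousOn F K) (hK : IsCompact K)
    (hbot : ∀ x, F x ≠ ⊥) : ∃ m : ℝ, ∀ x ∈ K, F x ≠ ⊤ → m ≤ (F x).toReal := by
  rcases K.eq_empty_or_nonempty with rfl | hne
  · simp
  obtain ⟨x₀, -, hmin⟩ := hF.exists_isMinOn hne hK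
  exact ⟨(F x₀).toReal, fun x hx htop => EReal.toReal_le_toReal (hmin hx) (hbot x₀) htop⟩

section Trajectories

variable {Y : Type*} [MetricSpace Y] {lam : ℝ} {E : Y → EReal} {y z : ℝ → Y} {a b x : Y}

theorem AbsContOn.absolutelyContinuousOnInterval_s15 {p q : ℝ} (hpq : p ≤ q) (h : AbsContOn y p q) :
    AbsolutelyContinuousOnInterval y p q := by
  obtain ⟨g, -, hgi, hg⟩ := h
  have hgI : IntervalIntegrable g volume p q :=
    (intervalIntegrable_iff_integrableOn_Icc_of_le hpq).2 hgi
  have hdist : ∀ s ∈ uIcc p q, ∀ t ∈ uIcc p q,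
      dist (y s) (y t) ≤ dist (∫ r in p..s, g r) (∫ r in p..t, g r) := by
    intro s hs t ht
    wlog hst : s ≤ t generalizing s t
    · simpa only [dist_comm] using this t ht s hs (le_of_not_ge hst)
    have hint : ∀ r ∈ uIcc p q, IntervalIntegrable g volume p r := fun r hr =>
      hgI.mono_set (uIcc_subset_uIcc_left hr)
    rw [dist_comm (∫ r in p..s, g r), Real.dist_eq,
      intervalIntegral.integral_interval_sub_left (hint t ht) (hint s hs)]
    rw [uIcc_of_le hpq] at hs ht
    exact (hg s hs t ht hst).trans (le_abs_self _)
  refine squeeze_zero' (Eventually.of_forall fun _ => Finset.sum_nonneg fun _ _ => dist_nonneg)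
    ?_ (hgI.absolutelyContinuousOnInterval_intervalIntegral (c := p) left_mem_uIcc)
  filter_upwards [mem_inf_of_right (mem_principal_self _)] with I hI
  exact Finset.sum_le_sum fun i hi => hdist _ (hI.1 i hi).1 _ (hI.1 i hi).2

theorem LocAbsCont.locallyAbsolutelyContinuousOn (h : LocAbsCont y) :
    LocallyAbsolutelyContinuousOn y (Ioi 0) := fun p q hpq =>
  have hmin : 0 < min p q := lt_min (hpq left_mem_uIcc) (hpq right_mem_uIcc)
  ((h _ _ hmin min_le_max).absolutelyContinuousOnInterval_s15 min_le_max).mono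
    (uIcc_of_le min_le_max).ge

theorem EVI.ae_energy_ne_top (h : EVI lam E y) (hx : E x ≠ ⊤) : ∀ᵐ t, 0 < t → E (y t) ≠ ⊤ := by
  filter_upwards [(ae_restrict_iff' measurableSet_Ioi).1 (h x)] with t ht hpos htop
  obtain ⟨d', -, hle⟩ := ht hpos
  rw [htop, EReal.coe_add_top, EReal.top_add_coe, top_le_iff] at hle
  exact hx hle

variable (hbot : ∀ x, E x ≠ ⊥) (hlsc : LowerSemicontinuous E)

section
include hbot

theorem EVI.ae_deriv_dist_sq_le (h : EVI lam E y) (hx : E x ≠ ⊤) :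
    ∀ᵐ t, 0 < t → deriv (fun s => dist (y s) x ^ 2) t
      ≤ 2 * (E x).toReal - 2 * (E (y t)).toReal - lam * dist (y t) x ^ 2 := by
  filter_upwards [(ae_restrict_iff' measurableSet_Ioi).1 (h x), h.ae_energy_ne_top hx]
    with t ht htop hpos
  obtain ⟨d', hd', hle⟩ := ht hpos
  have hderiv : deriv (fun s => dist (y s) x ^ 2) t = d' * 2 := by
    rw [← (hd'.mul_const 2).deriv]
    simp only [div_mul_cancel_of_invertible]
  rw [← EReal.coe_toReal (htop hpos) (hbot _), ← EReal.coe_toReal hx (hbot _)] at hle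
  norm_cast at hle
  linarith

include hlsc

theorem GradientFlow.intervalIntegrable_energy (h : GradientFlow lam E a y) (hx : E x ≠ ⊤)
    {p q : ℝ} (hp : 0 < p) (hpq : p ≤ q) :
    IntervalIntegrable (fun t => (E (y t)).toReal) volume p q := by
  have hIcc : ∀ t ∈ Icc p q, 0 < t := fun t ht => hp.trans_le ht.1
  have hac := h.1.locallyAbsolutelyContinuousOn
  have hcont : ContinuousOn y (Icc p q) := (hac.continuousOn isOpen_Ioi).mono hIcc
  obtain ⟨m, hm⟩ := exists_forall_le_toReal_of_isCompact
    ((hlsc.lowerSemicontinuousOn univ).comp hcont (mapsTo_univ _ _)) isCompact_Icc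
    fun t => hbot (y t)
  have hsq := (hac.fun_dist (.const x)).fun_sq
    (uIcc_of_le hpq ▸ hIcc : uIcc p q ⊆ Ioi 0)
  have hmeas : AEStronglyMeasurable (fun t => (E (y t)).toReal) (volume.restrict (Icc p q)) := by
    borelize Y
    exact (hlsc.measurable.comp_aemeasurable
      (hcont.aemeasurable measurableSet_Icc)).ereal_toReal.aestronglyMeasurable
  have hupper : IntervalIntegrable (fun t => (E x).toReal - lam / 2 * dist (y t) x ^ 2
      - 1 / 2 * deriv (fun s => dist (y s) x ^ 2) t) volume p q :=
    (intervalIntegrable_const.sub (hsq.continuousOn.intervalIntegrable.const_mul _)).sub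
      (hsq.intervalIntegrable_deriv.const_mul _)
  rw [intervalIntegrable_iff_integrableOn_Icc_of_le hpq] at hupper ⊢
  refine integrable_of_le_of_le hmeas ?_ ?_ (integrable_const m) hupper
  · filter_upwards [ae_restrict_of_ae (h.2.2.ae_energy_ne_top hx),
      ae_restrict_mem measurableSet_Icc] with t htop ht
    exact hm t ht (htop (hIcc t ht))
  · filter_upwards [ae_restrict_of_ae (h.2.2.ae_deriv_dist_sq_le hbot hx),
      ae_restrict_mem measurableSet_Icc] with t hderiv ht
    linarith [hderiv (hIcc t ht)]

theorem GradientFlow.dist_sq_sub_le_integral (h : GradientFlow lam E a y) (hx : E x ≠ ⊤)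
    {p q : ℝ} (hp : 0 < p) (hpq : p ≤ q) :
    dist (y q) x ^ 2 - dist (y p) x ^ 2
      ≤ ∫ r in p..q, (2 * (E x).toReal - 2 * (E (y r)).toReal - lam * dist (y r) x ^ 2) := by
  have hIcc : uIcc p q ⊆ Ioi 0 := ordConnected_Ioi.uIcc_subset hp (hp.trans_le hpq)
  have hsq := (h.1.locallyAbsolutelyContinuousOn.fun_dist (.const x)).fun_sq hIcc
  refine sub_le_integral_of_absolutelyContinuousOnInterval hpq hsq ?_ ?_
  · exact (intervalIntegrable_const.sub ((h.intervalIntegrable_energy hbot hlsc hx hp hpq).const_mul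
      2)).sub (hsq.continuousOn.intervalIntegrable.const_mul lam)
  · filter_upwards [h.2.2.ae_deriv_dist_sq_le hbot hx] with t ht htpq
    exact ht (hp.trans_le htpq.1)

theorem GradientFlow.ae_hasDerivAt_integral_energy (h : GradientFlow lam E a y) (hx : E x ≠ ⊤) :
    ∀ᵐ t, 0 < t → HasDerivAt (fun τ => ∫ r in t..τ, 2 * (E (y r)).toReal)
      (2 * (E (y t)).toReal) t := by
  refine ae_of_forall_Icc_ae isOpen_Ioi fun p q hpq => ?_
  rcases le_or_gt p q with hle | hlt
  · have hint := h.intervalIntegrable_energy hbot hlsc hx (hpq (left_mem_Icc.2 hle)) hle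
    rw [← uIcc_of_le hle]
    filter_upwards [(hint.const_mul 2).ae_hasDerivAt_integral] with t ht htpq using ht htpq t htpq
  · simp [Icc_eq_empty_of_lt hlt]

theorem GradientFlow.ae_deriv_dist_sq_le (hy : GradientFlow lam E a y)
    (hz : GradientFlow lam E b z) (hx : E x ≠ ⊤) :
    ∀ᵐ t, 0 < t → deriv (fun r => dist (y r) (z r) ^ 2) t ≤ -2 * lam * dist (y t) (z t) ^ 2 := by
  have hyac := hy.1.locallyAbsolutelyContinuousOn
  have hzac := hz.1.locallyAbsolutelyContinuousOn
  have hytop := hy.2.2.ae_energy_ne_top hx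
  have hztop := hz.2.2.ae_energy_ne_top hx
  filter_upwards [hytop, hy.ae_hasDerivAt_integral_energy hbot hlsc hx,
    hz.ae_hasDerivAt_integral_energy hbot hlsc hx,
    (hyac.fun_dist hzac).fun_sq.ae_differentiableAt isOpen_Ioi] with t htop hy' hz' hdiff ht
  have ht1 : t < t + 1 := lt_add_one t
  have hIcc : Icc t (t + 1) ⊆ Ioi 0 := fun r hr => lt_of_lt_of_le ht hr.1
  refine deriv_diag_le (D := fun r s => dist (y r) (z s) ^ 2) ht1 ?_ (hdiff ht)
    ((hy.intervalIntegrable_energy hbot hlsc hx ht ht1.le).const_mul 2)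
    ((hz.intervalIntegrable_energy hbot hlsc hx ht ht1.le).const_mul 2) (hy' ht) (hz' ht) ?_ ?_
  · have hyc : ContinuousOn (fun p : ℝ × ℝ => y p.1) (Icc t (t + 1) ×ˢ Icc t (t + 1)) :=
      ((hyac.continuousOn isOpen_Ioi).mono hIcc).comp continuousOn_fst fun _ hp => hp.1
    have hzc : ContinuousOn (fun p : ℝ × ℝ => z p.2) (Icc t (t + 1) ×ˢ Icc t (t + 1)) :=
      ((hzac.continuousOn isOpen_Ioi).mono hIcc).comp continuousOn_snd fun _ hp => hp.2
    exact (continuous_dist.comp_continuousOn (hyc.prodMk hzc)).pow 2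
  · filter_upwards [hztop] with τ hτtop hτ
    exact hy.dist_sq_sub_le_integral hbot hlsc (hτtop (ht.trans hτ.1)) ht hτ.1.le
  · intro τ hτ
    simpa only [dist_comm (y t)] using
      hz.dist_sq_sub_le_integral hbot hlsc (htop ht) ht hτ.1.le

theorem GradientFlow.dist_sq_le (hy : GradientFlow lam E a y) (hz : GradientFlow lam E b z)
    (hx : E x ≠ ⊤) {t : ℝ} (ht : 0 < t) :
    dist (y t) (z t) ^ 2 ≤ Real.exp (-2 * lam * t) * dist a b ^ 2 := by
  have hac := (hy.1.locallyAbsolutelyContinuousOn.fun_dist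
    hz.1.locallyAbsolutelyContinuousOn).fun_sq
  have hbound := le_exp_mul_add_of_ae_deriv_le (K := -2 * lam) (ε := 0) ht hac
    ((hy.2.1.dist hz.2.1).pow 2) ?_
  · simpa using hbound
  · filter_upwards [hy.ae_deriv_dist_sq_le hbot hlsc hz hx] with r hr hrt
    simpa using hr hrt.1

end

theorem LocAbsCont.comp_add_right (h : LocAbsCont y) {T : ℝ} (hT : 0 ≤ T) :
    LocAbsCont fun t => y (t + T) := fun p q hp hpq => by
  have hpqT : p + T ≤ q + T := add_le_add_left hpq T
  obtain ⟨g, hg₀, hgi, hg⟩ := h (p + T) (q + T) (by linarith) hpqT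
  refine ⟨fun r => g (r + T), fun r => hg₀ _, ?_, fun s hs t ht hst => ?_⟩
  · rw [← intervalIntegrable_iff_integrableOn_Icc_of_le hpqT] at hgi
    rw [← intervalIntegrable_iff_integrableOn_Icc_of_le hpq]
    simpa only [add_sub_cancel_right] using hgi.comp_add_right T
  · rw [intervalIntegral.integral_comp_add_right]
    exact hg _ ⟨by linarith [hs.1], by linarith [hs.2]⟩ _ ⟨by linarith [ht.1], by linarith [ht.2]⟩
      (by linarith)

theorem EVI.comp_add_right (h : EVI lam E y) {T : ℝ} (hT : 0 ≤ T) :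
    EVI lam E fun t => y (t + T) := fun x => by
  have hshift := (measurePreserving_add_right volume T).quasiMeasurePreserving.ae
    ((ae_restrict_iff' measurableSet_Ioi).1 (h x))
  rw [ae_restrict_iff' measurableSet_Ioi]
  filter_upwards [hshift] with t ht hpos
  obtain ⟨d', hd', hle⟩ := ht (add_pos_of_pos_of_nonneg hpos hT)
  exact ⟨d', hd'.comp_add_const t T, hle⟩

theorem GradientFlow.comp_add_right (h : GradientFlow lam E a y) {T : ℝ} (hT : 0 < T) :
    GradientFlow lam E (y T) fun t => y (t + T) := by
  refine ⟨h.1.comp_add_right hT.le, ?_, h.2.2.comp_add_right hT.le⟩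
  have hcont : ContinuousAt y T :=
    (h.1.locallyAbsolutelyContinuousOn.continuousOn isOpen_Ioi).continuousAt (Ioi_mem_nhds hT)
  have hadd : Tendsto (fun t => t + T) (𝓝[>] 0) (𝓝 T) :=
    ((continuous_add_const T).tendsto' 0 T (zero_add T)).mono_left nhdsWithin_le_nhds
  exact hcont.tendsto.comp hadd

section
variable {S : ℝ} (hS : IsGlobalSlopeBound lam E a S) (ha : E a ≠ ⊤)
include hbot hS ha

theorem GradientFlow.dist_start_le (h : GradientFlow lam E a y) {t : ℝ} (ht : 0 < t) :
    dist (y t) a ≤ S * ∫ r in (0 : ℝ)..t, Real.exp (-lam * r) := by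
  have hac := h.1.locallyAbsolutelyContinuousOn.fun_dist (.const a)
  have hlim : Tendsto (fun t => dist (y t) a) (𝓝[>] 0) (𝓝 0) := by
    simpa only [dist_self] using h.2.1.dist (tendsto_const_nhds (x := a))
  have hbound := le_exp_mul_add_of_ae_deriv_le (K := -lam) (ε := S) ht hac hlim ?_
  · rw [mul_zero, zero_add,
      intervalIntegral.integral_comp_sub_left (fun r => Real.exp (-lam * r))] at hbound
    simpa only [sub_self, sub_zero] using hbound
  filter_upwards [h.2.2.ae_deriv_dist_sq_le hbot ha, h.2.2.ae_energy_ne_top ha,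
    hac.ae_differentiableAt isOpen_Ioi] with r hderiv htop hdiff hr
  refine deriv_le_of_deriv_sq_le (hdiff hr.1) (fun _ => dist_nonneg) ?_ fun hzero => ?_
  · linarith [hderiv hr.1, hS.toReal_sub_toReal_le (y r) (htop hr.1)]
  · simpa only [hzero, mul_zero, zero_add] using hS.nonneg

theorem GradientFlow.ae_toReal_sub_toReal_le (h : GradientFlow lam E a y) :
    ∀ᵐ t, 0 < t → (E a).toReal - (E (y t)).toReal
      ≤ S ^ 2 * ∫ r in (0 : ℝ)..t, Real.exp (-2 * lam * r) := by
  filter_upwards [h.2.2.ae_energy_ne_top ha] with t htop ht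
  exact (hS.toReal_sub_toReal_le (y t) (htop ht)).trans <|
    mul_sub_mul_sq_le_of_le_mul_integral_exp hS.nonneg dist_nonneg (h.dist_start_le hbot hS ha ht)

theorem GradientFlow.dist_sq_le_of_isGlobalSlopeBound (h : GradientFlow lam E a y)
    (hb : E b ≠ ⊤) {T : ℝ} (hT : 0 < T) :
    dist (y T) b ^ 2 ≤ dist a b ^ 2 + 2 * T * ((E b).toReal - (E a).toReal)
      + 2 * S ^ 2 * (∫ r in (0 : ℝ)..T, ∫ q in (0 : ℝ)..r, Real.exp (-2 * lam * q))
      - lam * ∫ r in (0 : ℝ)..T, dist (y r) b ^ 2 := by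
  set θ : ℝ → ℝ := fun r => ∫ q in (0 : ℝ)..r, Real.exp (-2 * lam * q)
  have hac := (h.1.locallyAbsolutelyContinuousOn.fun_dist (.const b)).fun_sq
  have hlim : Tendsto (fun t => dist (y t) b ^ 2) (𝓝[>] 0) (𝓝 (dist a b ^ 2)) :=
    (h.2.1.dist tendsto_const_nhds).pow 2
  have hθ : IntervalIntegrable θ volume 0 T := by
    have hexp : Continuous fun q => Real.exp (-2 * lam * q) := by fun_prop
    exact (intervalIntegral.continuous_primitive
      (fun _ _ => hexp.intervalIntegrable _ _) 0).intervalIntegrable _ _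
  have hdist : IntervalIntegrable (fun r => dist (y r) b ^ 2) volume 0 T :=
    intervalIntegrable_of_continuousOn_Ioc_of_tendsto hT.le
      ((hac.continuousOn isOpen_Ioi).mono Ioc_subset_Ioi_self) hlim
  have hconstθ := (intervalIntegrable_const (c := 2 * ((E b).toReal - (E a).toReal))).add
    (hθ.const_mul (2 * S ^ 2))
  have hbound := sub_le_integral_of_tendsto_of_ae_deriv_le hT hac hlim
    (hconstθ.sub (hdist.const_mul lam)) ?_
  · rw [intervalIntegral.integral_sub hconstθ (hdist.const_mul lam),
      intervalIntegral.integral_add intervalIntegrable_const (hθ.const_mul _),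
      intervalIntegral.integral_const, intervalIntegral.integral_const_mul,
      intervalIntegral.integral_const_mul, smul_eq_mul] at hbound
    linarith
  · filter_upwards [h.2.2.ae_deriv_dist_sq_le hbot hb, h.ae_toReal_sub_toReal_le hbot hS ha]
      with r hderiv hdrop hr
    linarith [hderiv hr.1, hdrop hr.1]

end

end Trajectories

/-- The right-hand side is `⊤` as soon as `β` or `σ` is, so that only the real estimate remains. -/
theorem coe_le_coe_mul_of_toReal {x k d τ m I : ℝ} {α β : EReal} {σ : ℝ≥0∞} (hk : 0 < k)
    (hτ : 0 < τ) (hI : 0 < I) (hα : α ≠ ⊤) (hα' : α ≠ ⊥) (hβ : β ≠ ⊥)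
    (h : β ≠ ⊤ → σ ≠ ⊤ →
      x ≤ k * (d + τ * (β.toReal - α.toReal) + 2 * σ.toReal ^ 2 * I + m)) :
    (x : EReal) ≤ k * (d + τ * (β - α) + ((2 * σ ^ 2 * ENNReal.ofReal I : ℝ≥0∞) : EReal) + m) := by
  lift α to ℝ using ⟨hα, hα'⟩
  induction β with
  | bot => exact absurd rfl hβ
  | top =>
    rw [EReal.top_sub_coe, EReal.coe_mul_top_of_pos hτ, EReal.coe_add_top,
      EReal.top_add_of_ne_bot (EReal.coe_ennreal_ne_bot _), EReal.top_add_coe,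
      EReal.coe_mul_top_of_pos hk]
    exact le_top
  | coe β =>
    rcases eq_or_ne σ ⊤ with rfl | hσ
    · rw [ENNReal.top_pow two_ne_zero, ENNReal.mul_top two_ne_zero,
        ENNReal.top_mul (ENNReal.ofReal_pos.2 hI).ne', EReal.coe_ennreal_top,
        ← EReal.coe_sub, ← EReal.coe_mul, ← EReal.coe_add,
        EReal.coe_add_top, EReal.top_add_coe, EReal.coe_mul_top_of_pos hk]
      exact le_top
    · lift σ to ℝ≥0 using hσ
      have hslope : ((2 * (σ : ℝ≥0∞) ^ 2 * ENNReal.ofReal I : ℝ≥0∞) : EReal)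
          = ((2 * (σ : ℝ) ^ 2 * I : ℝ) : EReal) := by
        rw [← EReal.coe_ennreal_toReal (by finiteness)]
        simp [ENNReal.toReal_ofReal hI.le]
      rw [hslope]
      exact_mod_cast h (EReal.coe_ne_top _) ENNReal.coe_ne_top

theorem gradientFlow_apriori_estimate_general {Y : Type*} [MetricSpace Y] (hY : GeodesicSpace Y)
    (lam : ℝ) (E : Y → EReal) (hbot : ∀ y, E y ≠ ⊥) (hconv : LamConvex lam E)
    (hlsc : LowerSemicontinuous E)
    (a b : Y) (hEa : E a ≠ ⊤) (ytraj ztraj : ℝ → Y)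
    (hy : GradientFlow lam E a ytraj) (hz : GradientFlow lam E b ztraj)
    (s t : ℝ) (hs : 0 < s) (hst : s ≤ t) :
    ((dist (ytraj t) (ztraj s) ^ 2 : ℝ) : EReal) ≤
      ((Real.exp (-2 * lam * s) : ℝ) : EReal) *
        ( ((dist a b ^ 2 : ℝ) : EReal)
          + ((2 * (t - s) : ℝ) : EReal) * (E b - E a)
          + ((2 * descendingSlope E a ^ 2 *
                ENNReal.ofReal (∫ r in (0 : ℝ)..(t - s),
                  ∫ q in (0 : ℝ)..r, Real.exp (-2 * lam * q)) : ℝ≥0∞) : EReal)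
          + ((-(lam * ∫ r in (0 : ℝ)..(t - s), dist (ytraj r) b ^ 2) : ℝ) : EReal) ) := by
  rcases hst.eq_or_lt with rfl | hst
  · have hcontr := EReal.coe_le_coe_iff.2 (hy.dist_sq_le hbot hlsc hz hEa hs)
    simpa using hcontr
  have hT : 0 < t - s := sub_pos.2 hst
  have hcontr := (hy.comp_add_right hT).dist_sq_le hbot hlsc hz hEa hs
  rw [add_sub_cancel] at hcontr
  refine coe_le_coe_mul_of_toReal (Real.exp_pos _) (by positivity) (integral_integral_exp_pos _ hT)
    hEa (hbot a) (hbot b) fun hEb hslope => hcontr.trans ?_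
  have hbound := hconv.isGlobalSlopeBound hY hbot hEa hslope
  have hdist := hy.dist_sq_le_of_isGlobalSlopeBound hbot hbound hEa hEb hT
  exact mul_le_mul_of_nonneg_left (by linarith) (Real.exp_pos _).le

/-- **A priori estimate for gradient flows** of a nonnegative `λ`-convex lower
semicontinuous functional on a CAT(0) space: for `t ≥ s > 0`,
`d²(y_t, z_s) ≤ e^{−2λs}(d²(y,z) + 2(t−s)(E(z)−E(y)) + 2|∂⁻E|²(y)∫₀^{t−s}θ_λ(r)dr
− λ∫₀^{t−s} d²(y_r, z) dr)` where `θ_λ(r) = ∫₀^r e^{−2λq} dq`. -/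
theorem gradientFlow_apriori_estimate {Y : Type*} [MetricSpace Y] [CompleteSpace Y]
    (hY : Cat0 Y) (lam : ℝ) (E : Y → EReal) (hE0 : ∀ y, (0 : EReal) ≤ E y)
    (hconv : LamConvex lam E) (hlsc : LowerSemicontinuous E)
    (a b : Y) (hEa : E a ≠ ⊤) (ytraj ztraj : ℝ → Y)
    (hy : GradientFlow lam E a ytraj) (hz : GradientFlow lam E b ztraj)
    (s t : ℝ) (hs : 0 < s) (hst : s ≤ t) :
    ((dist (ytraj t) (ztraj s) ^ 2 : ℝ) : EReal) ≤
      ((Real.exp (-2 * lam * s) : ℝ) : EReal) *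
        ( ((dist a b ^ 2 : ℝ) : EReal)
          + ((2 * (t - s) : ℝ) : EReal) * (E b - E a)
          + ((2 * descendingSlope E a ^ 2 *
                ENNReal.ofReal (∫ r in (0:ℝ)..(t - s),
                  ∫ q in (0:ℝ)..r, Real.exp (-2 * lam * q)) : ℝ≥0∞) : EReal)
          + ((-(lam * ∫ r in (0:ℝ)..(t - s), dist (ytraj r) b ^ 2) : ℝ) : EReal) ) := by
  exact gradientFlow_apriori_estimate_general hY.1 lam E (fun x h => by simpa [h] using hE0 x)
    hconv hlsc a b hEa ytraj ztraj hy hz s t hs hst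
end
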